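/- arXiv:1506.06819 — 5 statements merged into one kernel-verified Lean document; each statement's English description precedes it below -/
import Mathlib

section
/- Let G be a connected finite simple graph on n vertices with Laplacian matrix L(G). Then: (1) for every vertex i, the number of spanning trees τ(G) equals the determinant of the reduced Laplacian L̃ obtained from L(G) by deleting the i-th row and i-th column; and (2) the product of the nonzero eigenvalues of L(G), counted with algebraic multiplicity, equals n·τ(G). -/
open Matrix

/-- `T` is (the edge set of) a spanning tree of `G`: `T ⊆ E(G)` and the graph `(V, T)`
is connected and acyclic. -/
def IsSpanningTree {V : Type*} (G : SimpleGraph V) (T : Set (Sym2 V)) : Prop :=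
  T ⊆ G.edgeSet ∧ (SimpleGraph.fromEdgeSet T).Connected ∧ (SimpleGraph.fromEdgeSet T).IsAcyclic

/-- The number of spanning trees of `G`. -/
noncomputable def treeCount {V : Type*} (G : SimpleGraph V) : ℕ :=
  Nat.card {T : Set (Sym2 V) // IsSpanningTree G T}

open Matrix in
lemma mtt_cauchyBinet {m E : Type*} [Fintype m] [DecidableEq m] [Fintype E] [DecidableEq E]
    (A : Matrix m E ℤ) :
    (A * Aᵀ).det = ∑ s ∈ (Finset.univ : Finset E).powersetCard (Fintype.card m),
      ((Aᵀ * A).submatrix (Subtype.val : s → E) (Subtype.val : s → E)).det := by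
  rw [← Matrix.coeff_det_one_add_X_smul_eq_sum_minors]
  have h1 := Matrix.coeff_det_one_add_X_smul_eq_sum_minors (A * Aᵀ) (Fintype.card m)
  have h2 : (Finset.univ : Finset m).powersetCard (Fintype.card m) = {Finset.univ} := by
    rw [← Finset.card_univ, Finset.powersetCard_self]
  rw [h2, Finset.sum_singleton] at h1
  have h3 : ((A * Aᵀ).submatrix (Subtype.val : ↥(Finset.univ : Finset m) → m)
      (Subtype.val : ↥(Finset.univ : Finset m) → m)).det = (A * Aᵀ).det :=
    Matrix.det_submatrix_equiv_self (Equiv.subtypeUnivEquiv (fun x => Finset.mem_univ x)) _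
  rw [h3] at h1
  rw [← h1]
  congr 1
  rw [Matrix.map_mul, Matrix.map_mul, ← Matrix.smul_mul, Matrix.det_one_add_mul_comm,
    Matrix.mul_smul]

/-- The oriented incidence matrix. -/
noncomputable def mttInc {V : Type*} [DecidableEq V] (G : SimpleGraph V) [DecidableRel G.Adj] :
    Matrix V (Sym2 V) ℤ := fun u e =>
  if e ∈ G.edgeSet then (if u = (Quot.out e).1 then 1 else 0) - (if u = (Quot.out e).2 then 1 else 0)
  else 0

lemma mtt_out {V : Type*} (e : Sym2 V) : s((Quot.out e).1, (Quot.out e).2) = e :=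
  Quot.out_eq e

lemma mttInc_mul {V : Type*} [DecidableEq V] (G : SimpleGraph V) [DecidableRel G.Adj]
    (a b : V) (e : Sym2 V) : mttInc G a e * mttInc G b e =
      if a = b then (if e ∈ G.incidenceSet a then 1 else 0)
      else (if e = s(a, b) ∧ G.Adj a b then -1 else 0) := by
  have h := mtt_out e
  unfold mttInc
  generalize (Quot.out e).1 = x at *
  generalize (Quot.out e).2 = y at *
  subst h
  by_cases hxy : G.Adj x y
  · have hne := hxy.ne
    have hyx := hxy.symm
    simp only [SimpleGraph.mem_edgeSet, hxy, if_true, SimpleGraph.incidenceSet, Set.mem_ofPred_eq,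
      true_and, Sym2.mem_iff, Sym2.eq_iff]
    by_cases ha : a = x <;> by_cases ha' : a = y <;> by_cases hb : b = x <;> by_cases hb' : b = y <;>
      simp_all <;> grind
  · have : ¬ (s(x, y) = s(a, b) ∧ G.Adj a b) := by
      rintro ⟨h, h'⟩
      rw [← SimpleGraph.mem_edgeSet, ← h] at h'
      exact hxy h'
    simp only [SimpleGraph.mem_edgeSet, hxy, this, SimpleGraph.incidenceSet, if_false]
    simp [hxy]

lemma mttInc_mul_transpose {V : Type*} [Fintype V] [DecidableEq V] (G : SimpleGraph V)
    [DecidableRel G.Adj] : mttInc G * (mttInc G).transpose = G.lapMatrix ℤ := by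
  ext a b
  simp only [Matrix.mul_apply, Matrix.transpose_apply, mttInc_mul, SimpleGraph.lapMatrix,
    SimpleGraph.degMatrix, Matrix.sub_apply, Matrix.diagonal_apply, SimpleGraph.adjMatrix_apply]
  by_cases hab : a = b
  · subst hab
    simp [← SimpleGraph.card_incidenceFinset_eq_degree, ← SimpleGraph.mem_incidenceFinset]
  · by_cases h : G.Adj a b <;> simp [hab, h]

/-- Unit vectors are in the column span. -/
lemma mtt_walk {V : Type*} [Fintype V] [DecidableEq V] (G : SimpleGraph V)
    [DecidableRel G.Adj] (S : Finset (Sym2 V)) (hS : (S : Set (Sym2 V)) ⊆ G.edgeSet) (v u : V)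
    (w : (SimpleGraph.fromEdgeSet (S : Set (Sym2 V))).Reachable u v) :
    ∃ p : S → ℤ, ∀ x, ∑ e : S, mttInc G x e * p e =
      (if x = u then 1 else 0) - (if x = v then 1 else 0) := by
  obtain ⟨w⟩ := w
  induction w with
  | nil => exact ⟨0, by simp⟩
  | @cons a b c h w ih =>
    obtain ⟨p, hp⟩ := ih
    rw [SimpleGraph.fromEdgeSet_adj] at h
    have hadj := hS h.1
    have ho := mtt_out s(a, b)
    have key : ∃ t : ℤ, ∀ x, mttInc G x s(a, b) * t =
        (if x = a then 1 else 0) - (if x = b then 1 else 0) := by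
      unfold mttInc
      rw [Sym2.eq_iff] at ho
      rcases ho with ⟨h1, h2⟩ | ⟨h1, h2⟩
      · exact ⟨1, fun x => by rw [h1, h2, if_pos hadj]; ring⟩
      · exact ⟨-1, fun x => by rw [h1, h2, if_pos hadj]; ring⟩
    obtain ⟨t, ht⟩ := key
    refine ⟨p + Pi.single ⟨s(a, b), h.1⟩ t, fun x => ?_⟩
    simp only [Pi.add_apply, mul_add, Finset.sum_add_distrib, hp]
    rw [Finset.sum_eq_single (⟨s(a, b), h.1⟩ : S)]
    · rw [Pi.single_eq_same, ht]; ring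
    · intro e _ he
      rw [Pi.single_eq_of_ne he, mul_zero]
    · simp

lemma mtt_isSpanningTree_iff {V : Type*} [Fintype V] [DecidableEq V] (G : SimpleGraph V)
    (S : Finset (Sym2 V)) (hS : (S : Set (Sym2 V)) ⊆ G.edgeSet) :
    IsSpanningTree G (S : Set (Sym2 V)) ↔
      (SimpleGraph.fromEdgeSet (S : Set (Sym2 V))).Connected ∧ S.card + 1 = Fintype.card V := by
  have h := SimpleGraph.isTree_iff_connected_and_card
    (G := SimpleGraph.fromEdgeSet (S : Set (Sym2 V)))
  have hE : (SimpleGraph.fromEdgeSet (S : Set (Sym2 V))).edgeSet = S := by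
    rw [SimpleGraph.edgeSet_fromEdgeSet]
    ext e
    simp only [Set.mem_sdiff, and_iff_left_iff_imp]
    intro he hd
    exact G.not_isDiag_of_mem_edgeSet (hS he) hd
  rw [hE, Nat.card_eq_fintype_card, Nat.card_eq_fintype_card] at h
  simp only [Finset.coe_sort_coe, Fintype.card_coe] at h
  rw [← h, SimpleGraph.isTree_iff]
  exact ⟨fun h => h.2, fun h => ⟨hS, h⟩⟩

open Classical in
lemma mtt_minor {V : Type*} [Fintype V] [DecidableEq V] (G : SimpleGraph V)
    [DecidableRel G.Adj] (v : V) (S : Finset (Sym2 V)) (hc : S.card = Fintype.card {u : V // u ≠ v})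
    (A : Matrix {u : V // u ≠ v} (Sym2 V) ℤ) (hA : A = (mttInc G).submatrix Subtype.val id) :
    ((A.transpose * A).submatrix (Subtype.val : S → Sym2 V) (Subtype.val : S → Sym2 V)).det =
      if IsSpanningTree G (S : Set (Sym2 V)) then 1 else 0 := by
  have hcard : S.card + 1 = Fintype.card V := by
    have : 0 < Fintype.card V := Fintype.card_pos_iff.2 ⟨v⟩
    rw [hc, Fintype.card_subtype_compl, Fintype.card_subtype_eq]; omega
  let f : {u : V // u ≠ v} ≃ S := Fintype.equivOfCardEq (by rw [← hc, Fintype.card_coe])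
  let N : Matrix {u : V // u ≠ v} {u : V // u ≠ v} ℤ := A.submatrix id (fun u => (f u : Sym2 V))
  have hdet : ((A.transpose * A).submatrix (Subtype.val : S → Sym2 V)
      (Subtype.val : S → Sym2 V)).det = N.det * N.det := by
    rw [← Matrix.det_submatrix_equiv_self f]
    nth_rewrite 1 [← Matrix.det_transpose N]
    rw [← Matrix.det_mul]
    rfl
  have hN : ∀ x y, N x y = mttInc G x (f y) := by intro x y; subst hA; rfl
  rw [hdet]
  by_cases hS : (S : Set (Sym2 V)) ⊆ G.edgeSet
  · rw [mtt_isSpanningTree_iff G S hS]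
    simp only [hcard, and_true]
    split_ifs with hconn
    · have : ∃ P, N * P = 1 := by
        choose p hp using fun u => mtt_walk G S hS v u (hconn.preconnected u v)
        refine ⟨Matrix.of fun y u => p u (f y), ?_⟩
        ext x u
        rw [Matrix.mul_apply]
        simp only [hN, Matrix.of_apply]
        rw [f.sum_comp (fun e : S => mttInc G x e * p u e), hp, if_neg x.2, sub_zero]
        simp [Matrix.one_apply, Subtype.ext_iff]
      obtain ⟨P, hP⟩ := this
      have h1 : N.det * P.det = 1 := by rw [← Matrix.det_mul, hP, Matrix.det_one]
      rcases Int.isUnit_iff.1 (IsUnit.of_mul_eq_one _ h1) with h | h <;> rw [h] <;> rfl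
    · have : N.det = 0 := by
        rw [← Matrix.exists_vecMul_eq_zero_iff]
        have hex : ∃ u, ¬ (SimpleGraph.fromEdgeSet (S : Set (Sym2 V))).Reachable u v := by
          by_contra! hcon
          have : Nonempty V := ⟨v⟩
          exact hconn ⟨fun a b => (hcon a).trans (hcon b).symm⟩
        obtain ⟨u, hu⟩ := hex
        let g : V → ℤ := fun x =>
          if (SimpleGraph.fromEdgeSet (S : Set (Sym2 V))).Reachable x v then 0 else 1
        have hgv : g v = 0 := if_pos (SimpleGraph.Reachable.refl v)
        have hgu : g u = 1 := if_neg hu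
        have huv : u ≠ v := by rintro rfl; exact hu (SimpleGraph.Reachable.refl u)
        refine ⟨fun x => g x, fun h0 => ?_, ?_⟩
        · have := congrFun h0 ⟨u, huv⟩
          simp [hgu] at this
        · ext y
          simp only [Matrix.vecMul, dotProduct, hN, Pi.zero_apply]
          have hsum : ∑ x : {u : V // u ≠ v}, g x * mttInc G x (f y) =
              ∑ x : V, g x * mttInc G x (f y) := by
            rw [← Finset.add_sum_erase _ _ (Finset.mem_univ v), hgv, zero_mul, zero_add]
            exact (Finset.sum_subtype (Finset.univ.erase v) (by simp)
              (fun x => g x * mttInc G x (f y))).symm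
          rw [hsum]
          have hmem := (f y).2
          have ho := mtt_out (f y : Sym2 V)
          unfold mttInc
          generalize (Quot.out (f y : Sym2 V)).1 = a at *
          generalize (Quot.out (f y : Sym2 V)).2 = b at *
          have hE : (f y : Sym2 V) ∈ G.edgeSet := hS hmem
          simp only [hE, if_true, mul_sub, Finset.sum_sub_distrib, mul_ite, mul_one, mul_zero,
            Finset.sum_ite_eq', Finset.mem_univ]
          have hab : (SimpleGraph.fromEdgeSet (S : Set (Sym2 V))).Adj a b := by
            rw [SimpleGraph.fromEdgeSet_adj, ho]
            refine ⟨hmem, ?_⟩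
            rw [← ho] at hE
            exact SimpleGraph.Adj.ne hE
          have : (SimpleGraph.fromEdgeSet (S : Set (Sym2 V))).Reachable a v ↔
              (SimpleGraph.fromEdgeSet (S : Set (Sym2 V))).Reachable b v :=
            ⟨fun h => hab.symm.reachable.trans h, fun h => hab.reachable.trans h⟩
          simp [g, this]
      rw [this, zero_mul]
  · rw [if_neg (fun h => hS h.1)]
    obtain ⟨e, he, heG⟩ := Set.not_subset.1 hS
    rw [Matrix.det_eq_zero_of_column_eq_zero (f.symm ⟨e, he⟩), zero_mul]
    intro x
    rw [hN, Equiv.apply_symm_apply, mttInc, if_neg heG]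

lemma mtt_part1 {V : Type*} [Fintype V] [DecidableEq V]
    (G : SimpleGraph V) [DecidableRel G.Adj] (v : V) :
      (treeCount G : ℤ) =
        ((SimpleGraph.lapMatrix ℤ G).submatrix
          (Subtype.val : {u : V // u ≠ v} → V) Subtype.val).det := by
  classical
  have h : (SimpleGraph.lapMatrix ℤ G).submatrix (Subtype.val : {u : V // u ≠ v} → V) Subtype.val
      = ((mttInc G).submatrix (Subtype.val : {u : V // u ≠ v} → V) id) *
        ((mttInc G).submatrix (Subtype.val : {u : V // u ≠ v} → V) id).transpose := by
    rw [← mttInc_mul_transpose]; rfl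
  rw [h, mtt_cauchyBinet, Finset.sum_congr rfl fun S hS =>
    mtt_minor G v S (Finset.mem_powersetCard.1 hS).2 _ rfl]
  rw [Finset.sum_boole, treeCount, Nat.cast_inj]
  rw [← Fintype.card_coe, ← Nat.card_eq_fintype_card]
  symm
  refine Nat.card_congr (Equiv.ofBijective (fun S => ⟨(S.1 : Set (Sym2 V)),
    (Finset.mem_filter.1 S.2).2⟩) ⟨?_, ?_⟩)
  · intro S T h
    exact Subtype.ext (Finset.coe_injective (congrArg Subtype.val h))
  · rintro ⟨T, hT⟩
    have hco : ((T.toFinite.toFinset : Finset (Sym2 V)) : Set (Sym2 V)) = T := by simp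
    have hT' : IsSpanningTree G ((T.toFinite.toFinset : Finset (Sym2 V)) : Set (Sym2 V)) := by
      rw [hco]; exact hT
    have hc := ((mtt_isSpanningTree_iff G _ hT'.1).1 hT').2
    refine ⟨⟨T.toFinite.toFinset, ?_⟩, Subtype.ext hco⟩
    rw [Finset.mem_filter, Finset.mem_powersetCard]
    refine ⟨⟨Finset.subset_univ _, ?_⟩, hT'⟩
    rw [Fintype.card_subtype_compl, Fintype.card_subtype_eq]; omega

lemma mtt_multiset (R : Multiset ℂ) (c : ℂ) (hc : c ≠ 0)
    (h0 : ((R.map fun a => Polynomial.X - Polynomial.C a).prod).coeff 0 = 0)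
    (h1 : ((R.map fun a => Polynomial.X - Polynomial.C a).prod).coeff 1 =
      (-1) ^ (R.card - 1) * c) : (R.filter (· ≠ 0)).prod = c := by
  have hmem : (0 : ℂ) ∈ R := by
    rw [Polynomial.coeff_zero_multiset_prod, Multiset.map_map] at h0
    simpa [Multiset.prod_eq_zero_iff] using h0
  obtain ⟨R', rfl⟩ := Multiset.exists_cons_of_mem hmem
  simp only [Multiset.map_cons, Multiset.prod_cons, Polynomial.C_0, sub_zero,
    Multiset.card_cons, Nat.add_sub_cancel] at h1
  rw [show (1 : ℕ) = 0 + 1 from rfl, Polynomial.coeff_X_mul, Polynomial.coeff_zero_multiset_prod,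
    Multiset.map_map] at h1
  have h2 : (R'.map ((fun f : Polynomial ℂ => f.coeff 0) ∘
      fun a => Polynomial.X - Polynomial.C a)).prod = (-1) ^ R'.card * R'.prod := by
    rw [← Multiset.prod_map_neg]
    congr 1
    exact Multiset.map_congr rfl (by simp)
  rw [h2] at h1
  have h3 : R'.prod = c := mul_left_cancel₀ (pow_ne_zero _ (by norm_num)) h1
  have h4 : (0 : ℂ) ∉ R' := fun h => hc (h3 ▸ Multiset.prod_eq_zero h)
  rw [Multiset.filter_cons_of_neg _ (by simp), Multiset.filter_eq_self.2, h3]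
  rintro a ha rfl
  exact h4 ha

lemma mtt_erase {V : Type*} [Fintype V] [DecidableEq V] (v : V) (M : Matrix V V ℂ) :
    (M.submatrix (Subtype.val : ↥(Finset.univ.erase v) → V) Subtype.val).det =
      (M.submatrix (Subtype.val : {u : V // u ≠ v} → V) Subtype.val).det := by
  let f : ↥(Finset.univ.erase v) ≃ {u : V // u ≠ v} :=
    ⟨fun x => ⟨x.1, Finset.ne_of_mem_erase x.2⟩, fun x => ⟨x.1, by simp [x.2]⟩,
      fun x => rfl, fun x => rfl⟩
  rw [← Matrix.det_submatrix_equiv_self f]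
  rfl

lemma mtt_part2 {V : Type*} [Fintype V] [DecidableEq V]
    (G : SimpleGraph V) [DecidableRel G.Adj] (hG : G.Connected) :
    ((SimpleGraph.lapMatrix ℂ G).charpoly.roots.filter (· ≠ 0)).prod =
      (Fintype.card V : ℂ) * (treeCount G : ℂ) := by
  classical
  have := hG.nonempty
  have hpos : 0 < Fintype.card V := Fintype.card_pos
  have hL : SimpleGraph.lapMatrix ℂ G = (SimpleGraph.lapMatrix ℤ G).map (Int.castRingHom ℂ) := by
    ext a b
    by_cases hab : a = b <;> by_cases h : G.Adj a b <;>
      simp [SimpleGraph.lapMatrix, SimpleGraph.degMatrix, hab, h]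
  set L := SimpleGraph.lapMatrix ℂ G with hLdef
  have hsplit : L.charpoly.Splits := IsAlgClosed.splits _
  have hcard : L.charpoly.roots.card = Fintype.card V := by
    rw [← hsplit.natDegree_eq_card_roots, Matrix.charpoly_natDegree_eq_dim]
  have hprod := Polynomial.prod_multiset_X_sub_C_of_monic_of_roots_card_eq
    (Matrix.charpoly_monic L) hsplit.natDegree_eq_card_roots.symm
  have htree : treeCount G ≠ 0 := by
    obtain ⟨T, hT, hT'⟩ := hG.exists_isTree_le
    rw [treeCount, Nat.card_ne_zero]
    refine ⟨⟨T.edgeSet, ?_, ?_⟩, inferInstance⟩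
    · exact SimpleGraph.edgeSet_mono hT
    · rw [SimpleGraph.fromEdgeSet_edgeSet]; exact ⟨hT'.connected, hT'.isAcyclic⟩
  apply mtt_multiset
  · exact mul_ne_zero (by exact_mod_cast hpos.ne') (by exact_mod_cast htree)
  · rw [hprod]
    have hd : L.det = 0 := by
      rw [← Matrix.exists_mulVec_eq_zero_iff]
      refine ⟨fun _ => 1, fun h => ?_, SimpleGraph.lapMatrix_mulVec_const_eq_zero G⟩
      simpa using congrFun h (Classical.arbitrary V)
    have := Matrix.det_eq_sign_charpoly_coeff L
    rw [hd] at this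
    simpa using this.symm
  · rw [hprod, hcard]
    have := Matrix.charpoly_coeff_eq_sum_minors L (Fintype.card V - 1) (by omega)
    rw [show Fintype.card V - (Fintype.card V - 1) = 1 by omega] at this
    rw [this]
    congr 1
    have hpc : (Finset.univ : Finset V).powersetCard (Fintype.card V - 1) =
        Finset.univ.image (fun v : V => Finset.univ.erase v) := by
      ext s
      simp only [Finset.mem_powersetCard, Finset.subset_univ, true_and, Finset.mem_image,
        Finset.mem_univ]
      constructor
      · intro h
        have : sᶜ.card = 1 := by rw [Finset.card_compl]; omega
        obtain ⟨v, hv⟩ := Finset.card_eq_one.1 this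
        refine ⟨v, ?_⟩
        rw [← compl_compl s, hv]
        ext x; simp
      · rintro ⟨v, rfl⟩
        rw [Finset.card_erase_of_mem (Finset.mem_univ v), Finset.card_univ]
    rw [hpc, Finset.sum_image]
    · rw [Finset.sum_congr rfl (g := fun _ => (treeCount G : ℂ))]
      · simp
      · intro v _
        have h1 : ((treeCount G : ℤ) : ℂ) = _ := congrArg (Int.castRingHom ℂ) (mtt_part1 G v)
        rw [Int.cast_natCast] at h1
        rw [h1, RingHom.map_det, hL]
        exact mtt_erase v _
    · intro a _ b _ h
      by_contra hne
      have : a ∈ Finset.univ.erase b := by simp [hne]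
      have h' : a ∈ Finset.univ.erase a := by
        simp only at h; rw [h]; exact this
      simp at h'

/-- **The Matrix-Tree Theorem.**  For a connected graph `G` on `n` vertices:
(1) `τ(G)` equals the determinant of the reduced Laplacian obtained by deleting the row and
column of any vertex `v`; and (2) the product of the nonzero eigenvalues of the Laplacian,
with algebraic multiplicity, equals `n · τ(G)`. -/
theorem matrix_tree_theorem {V : Type*} [Fintype V] [DecidableEq V]
    (G : SimpleGraph V) [DecidableRel G.Adj] (hG : G.Connected) :
    (∀ v : V,
      (treeCount G : ℤ) =
        ((SimpleGraph.lapMatrix ℤ G).submatrix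
          (Subtype.val : {u : V // u ≠ v} → V) Subtype.val).det) ∧
    ((SimpleGraph.lapMatrix ℂ G).charpoly.roots.filter (· ≠ 0)).prod =
      (Fintype.card V : ℂ) * (treeCount G : ℂ) := by
  exact ⟨fun v => mtt_part1 G v, mtt_part2 G hG⟩
end

section
/- Let G be a finite simple graph on n vertices with connected components G_1,…,G_c of orders n_1,…,n_c, and let τ(G) be the number of maximal spanning forests of G (sets of edges F such that (V,F) is acyclic and has exactly c connected components). Then: (1) the product of the nonzero eigenvalues of L(G), counted with algebraic multiplicity, equals n_1·n_2⋯n_c·τ(G); (2) for any choice of one vertex from each component, τ(G) = det(L_S), where L_S is the submatrix of L(G) obtained by deleting the c rows and columns corresponding to the chosen vertices; and (3) the number of rooted maximal spanning forests of G, i.e., pairs (F,ρ) where F is a maximal spanning forest and ρ is a choice of one vertex from each connected component of G, equals the product of the nonzero eigenvalues of L(G). -/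
open Matrix

/-- `T` is (the edge set of) a maximal spanning forest of `G`: `T ⊆ E(G)`, the graph
`(V, T)` is acyclic, and it has exactly as many connected components as `G`. -/
def IsMaxSpanningForest {V : Type*} (G : SimpleGraph V) (T : Set (Sym2 V)) : Prop :=
  T ⊆ G.edgeSet ∧ (SimpleGraph.fromEdgeSet T).IsAcyclic ∧
    Nat.card (SimpleGraph.fromEdgeSet T).ConnectedComponent = Nat.card G.ConnectedComponent

/-- The number of maximal spanning forests of `G`. -/
noncomputable def forestCount {V : Type*} (G : SimpleGraph V) : ℕ :=
  Nat.card {T : Set (Sym2 V) // IsMaxSpanningForest G T}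

/-- every vertex can be reached from outside `s` using edges in `F`. -/
def MFReach {V : Type*} (s : Finset V) (F : Finset (Sym2 V)) : Prop :=
  ∀ S : Set V, (∀ v, v ∉ s → v ∈ S) → (∀ a b, s(a, b) ∈ F → a ∈ S → b ∈ S) → ∀ v, v ∈ S

lemma MFReach.insert_iff {V : Type*} [DecidableEq V] {s : Finset V} {F : Finset (Sym2 V)} {u v : V}
    (hv : v ∉ s) :
    MFReach s (insert s(u, v) F) ↔ MFReach (s.erase u) F := by
  constructor
  · intro h S h1 h2
    have huS : u ∈ S := h1 u (by simp)
    have hvS : v ∈ S := h1 v (by simp [hv])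
    refine h S (fun x hx => h1 x (by simp [hx])) ?_
    intro a b hab ha
    rcases Finset.mem_insert.1 hab with h' | h'
    · rcases Sym2.eq_iff.1 h' with ⟨rfl, rfl⟩ | ⟨rfl, rfl⟩ <;> assumption
    · exact h2 a b h' ha
  · intro h S h1 h2
    refine h S ?_ (fun a b hab => h2 a b (Finset.mem_insert_of_mem hab))
    intro x hx
    by_cases hxu : x = u
    · subst hxu
      exact h2 v x (by rw [Sym2.eq_swap]; simp) (h1 v hv)
    · exact h1 x (fun h' => hx (by simp [hxu, h']))

lemma MFReach.exists_edge {V : Type*} {s : Finset V} {F : Finset (Sym2 V)}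
    (h : MFReach s F) (hs : s.Nonempty) : ∃ u v, u ∈ s ∧ v ∉ s ∧ s(u, v) ∈ F := by
  by_contra! hc
  obtain ⟨x, hx⟩ := hs
  exact h {v | v ∉ s} (fun v hv => hv) (fun a b hab ha hb => hc b a hb ha (by rwa [Sym2.eq_swap])) x hx

lemma MFReach.exists_subset {V : Type*} [DecidableEq V] (n : ℕ) : ∀ (s : Finset V)
    (F : Finset (Sym2 V)), s.card = n → MFReach s F →
      ∃ F' ⊆ F, MFReach s F' ∧ F'.card = s.card := by
  induction n with
  | zero =>
    intro s F hs h
    rw [Finset.card_eq_zero] at hs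
    subst hs
    exact ⟨∅, by simp, fun S h1 _ v => h1 v (by simp), by simp⟩
  | succ n ih =>
    intro s F hs h
    obtain ⟨u, v, hu, hv, he⟩ := h.exists_edge (Finset.card_pos.1 (by omega))
    have h' : MFReach (s.erase u) (F.erase s(u, v)) := by
      rw [← MFReach.insert_iff hv, Finset.insert_erase he]; exact h
    obtain ⟨F', hF', hr, hc⟩ := ih _ _ (by rw [Finset.card_erase_of_mem hu]; omega) h'
    refine ⟨insert s(u, v) F', ?_, (MFReach.insert_iff hv).2 hr, ?_⟩
    · intro e hx
      rcases Finset.mem_insert.1 hx with rfl | hx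
      · exact he
      · exact Finset.mem_of_mem_erase (hF' hx)
    · rw [Finset.card_insert_of_notMem (fun hx => by simpa using hF' hx), hc,
        Finset.card_erase_of_mem hu]
      omega

lemma mf_closed {V : Type*} {F : Finset (Sym2 V)} {S : Set V}
    (h2 : ∀ a b, s(a, b) ∈ F → a ∈ S → b ∈ S) {r x : V}
    (h : (SimpleGraph.fromEdgeSet (F : Set (Sym2 V))).Reachable r x) (hrS : r ∈ S) : x ∈ S := by
  obtain ⟨w⟩ := h
  induction w with
  | nil => exact hrS
  | cons hadj p ih =>
    rw [SimpleGraph.fromEdgeSet_adj] at hadj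
    exact ih (h2 _ _ (by simpa using hadj.1) hrS)

lemma MFReach_iff {V : Type*} {s : Finset V} {F : Finset (Sym2 V)} :
    MFReach s F ↔ ∀ x, ∃ r, r ∉ s ∧ (SimpleGraph.fromEdgeSet (F : Set (Sym2 V))).Reachable r x := by
  constructor
  · intro h
    refine h {x | ∃ r, r ∉ s ∧ (SimpleGraph.fromEdgeSet (F : Set (Sym2 V))).Reachable r x}
      (fun v hv => ⟨v, hv, SimpleGraph.Reachable.refl _⟩) ?_
    rintro a b hab ⟨r, hr, h'⟩
    by_cases hne : a = b
    · subst hne; exact ⟨r, hr, h'⟩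
    · refine ⟨r, hr, h'.trans (SimpleGraph.Adj.reachable ?_)⟩
      rw [SimpleGraph.fromEdgeSet_adj]
      exact ⟨by simpa using hab, hne⟩
  · intro h S h1 h2 x
    obtain ⟨r, hr, h'⟩ := h x
    exact mf_closed h2 h' (h1 r hr)

/-- edge Laplacian -/
def mfB {V : Type*} [DecidableEq V] (R : Type*) [CommRing R] (e : Sym2 V) : Matrix V V R :=
  fun i j => if i ∈ e then (if i = j then 1 else if j ∈ e then -1 else 0) else 0

/-- Laplacian of an edge set -/
def mfL {V : Type*} [DecidableEq V] (R : Type*) [CommRing R] (T : Finset (Sym2 V)) :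
    Matrix V V R := ∑ e ∈ T, mfB R e

lemma mfL_lap {V : Type*} [Fintype V] [DecidableEq V] (R : Type*) [CommRing R]
    (G : SimpleGraph V) [DecidableRel G.Adj] : mfL R G.edgeFinset = G.lapMatrix R := by
  ext i j
  simp only [mfL, mfB, Matrix.sum_apply, SimpleGraph.lapMatrix, SimpleGraph.degMatrix,
    Matrix.sub_apply, SimpleGraph.adjMatrix_apply, Matrix.diagonal_apply]
  by_cases hij : i = j
  · subst hij
    simp only [if_true, SimpleGraph.irrefl, if_false, sub_zero]
    rw [Finset.sum_boole, ← SimpleGraph.card_incidenceFinset_eq_degree,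
      SimpleGraph.incidenceFinset_eq_filter]
  · simp only [hij, if_false, zero_sub]
    have : ∀ e : Sym2 V, (if i ∈ e then (if j ∈ e then (-1 : R) else 0) else 0)
        = if e = s(i, j) then -1 else 0 := by
      intro e
      have := Sym2.mem_and_mem_iff (z := e) hij
      rw [← ite_and]
      simp only [this]
    simp only [this]
    rw [Finset.sum_ite_eq']
    by_cases h : G.Adj i j <;> simp [h]

/-- Laplacian with the rows outside `s` replaced by rows of the identity -/
def mfM {V : Type*} [DecidableEq V] (R : Type*) [CommRing R] (s : Finset V) (T : Finset (Sym2 V)) :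
    Matrix V V R := Matrix.of (s.piecewise (mfL R T).row (1 : Matrix V V R).row)

lemma mfM_apply {V : Type*} [DecidableEq V] (R : Type*) [CommRing R] (s : Finset V)
    (T : Finset (Sym2 V)) (i : V) :
    mfM R s T i = if i ∈ s then mfL R T i else Pi.single i 1 := by
  ext j
  by_cases h : i ∈ s
  · simp [mfM, h]
  · simp [mfM, h, Matrix.one_apply, Pi.single_apply, eq_comm]

lemma mfM_step {V : Type*} [Fintype V] [DecidableEq V] (R : Type*) [CommRing R] (s : Finset V)
    (T : Finset (Sym2 V)) {u v : V} (hu : u ∈ s) (hv : v ∉ s) (he : s(u, v) ∉ T) :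
    (mfM R s (insert s(u, v) T)).det = (mfM R s T).det + (mfM R (s.erase u) T).det := by
  have huv : u ≠ v := fun h => hv (h ▸ hu)
  have hL : mfL R (insert s(u, v) T) = mfB R s(u, v) + mfL R T := by
    simp [mfL, Finset.sum_insert he]
  have h1 : mfM R s (insert s(u, v) T) = (mfM R s T).updateRow u
      (mfM R s T u + (Pi.single u 1 - Pi.single v 1)) := by
    ext i j
    rw [mfM_apply, hL]
    by_cases hi : i = u
    · subst hi
      simp only [hu, if_true, Matrix.updateRow_self, mfM_apply, mfB, Matrix.add_apply,
        Pi.add_apply, Pi.sub_apply, Pi.single_apply]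
      rw [add_comm]
      congr 1
      by_cases h : i = j
      · subst h; simp [huv]
      · by_cases h' : j = v
        · subst h'; simp [h, Ne.symm h]
        · simp [h, h', Ne.symm h]
    · rw [Matrix.updateRow_ne hi, mfM_apply]
      by_cases his : i ∈ s
      · have hiv : i ≠ v := fun h => hv (h ▸ his)
        simp [his, mfB, hi, hiv]
      · simp [his]
  have h2 : mfM R (s.erase u) T = (mfM R s T).updateRow u (Pi.single u 1) := by
    ext i j
    rw [mfM_apply]
    by_cases hi : i = u
    · subst hi; simp
    · rw [Matrix.updateRow_ne hi, mfM_apply]; simp [hi]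
  have h3 : ((mfM R s T).updateRow u (Pi.single v 1)).det = 0 := by
    have : Pi.single v 1 = mfM R s T v := by rw [mfM_apply]; simp [hv]
    rw [this]
    exact Matrix.det_updateRow_eq_zero huv.symm
  rw [h1, h2, Matrix.det_updateRow_add, Matrix.updateRow_eq_self, sub_eq_add_neg,
    Matrix.det_updateRow_add, ← neg_one_smul R (Pi.single v 1 : V → R), Matrix.det_updateRow_smul, h3]
  simp

open scoped Classical in
lemma mfM_det {V : Type*} [Fintype V] [DecidableEq V] (R : Type*) [CommRing R] [IsDomain R]
    (n : ℕ) : ∀ (T : Finset (Sym2 V)) (s : Finset V), T.card = n → (∀ e ∈ T, ¬ e.IsDiag) →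
    (mfM R s T).det =
      ∑ F ∈ T.powerset, if MFReach s F ∧ F.card = s.card then (1 : R) else 0 := by
  induction n using Nat.strong_induction_on with
  | _ n ih =>
  intro T s hT hd
  by_cases hc : ∃ u v, u ∈ s ∧ v ∉ s ∧ s(u, v) ∈ T
  · obtain ⟨u, v, hu, hv, he⟩ := hc
    obtain ⟨T', he', rfl⟩ : ∃ T', s(u, v) ∉ T' ∧ T = insert s(u, v) T' :=
      ⟨T.erase s(u, v), by simp, (Finset.insert_erase he).symm⟩
    rw [Finset.card_insert_of_notMem he'] at hT
    have hd' : ∀ e ∈ T', ¬ e.IsDiag := fun e h => hd e (Finset.mem_insert_of_mem h)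
    rw [mfM_step R s T' hu hv he', Finset.sum_powerset_insert he',
      ih T'.card (by omega) T' s rfl hd', ih T'.card (by omega) T' _ rfl hd']
    congr 1
    refine Finset.sum_congr rfl fun F hF => ?_
    have hF' : s(u, v) ∉ F := fun h => he' (Finset.mem_powerset.1 hF h)
    have hpos : 0 < s.card := Finset.card_pos.2 ⟨u, hu⟩
    rw [MFReach.insert_iff hv, Finset.card_insert_of_notMem hF', Finset.card_erase_of_mem hu]
    have : F.card = s.card - 1 ↔ F.card + 1 = s.card := by omega
    simp only [this]
  · rcases s.eq_empty_or_nonempty with rfl | hs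
    · have h1 : mfM R ∅ T = 1 := by
        ext i j
        rw [mfM_apply]
        simp [Matrix.one_apply, Pi.single_apply, eq_comm]
      rw [h1, Matrix.det_one, Finset.sum_eq_single ∅]
      · rw [if_pos ⟨fun S h1 _ v => h1 v (by simp), by simp⟩]
      · intro F _ hF
        rw [if_neg]
        rintro ⟨_, h⟩
        exact hF (by simpa using h)
      · intro h; exact absurd (Finset.empty_mem_powerset T) h
    · rw [Finset.sum_eq_zero]
      · apply Matrix.exists_mulVec_eq_zero_iff.1
        refine ⟨fun j => if j ∈ s then 1 else 0, ?_, ?_⟩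
        · obtain ⟨x, hx⟩ := hs
          intro h
          have := congrFun h x
          simp [hx] at this
        · ext i
          simp only [Matrix.mulVec, dotProduct, Pi.zero_apply]
          by_cases hi : i ∈ s
          · simp only [mfM_apply, hi, if_true, mfL, Matrix.sum_apply, Finset.sum_mul]
            rw [Finset.sum_comm]
            refine Finset.sum_eq_zero fun e he => ?_
            by_cases hie : i ∈ e
            · obtain ⟨b, rfl⟩ := Sym2.mem_iff_exists.1 hie
              have hib : i ≠ b := by simpa using hd _ he
              have hbs : b ∈ s := by
                by_contra hbs
                exact hc ⟨i, b, hi, hbs, he⟩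
              have : ∀ j, mfB R s(i, b) i j * (if j ∈ s then 1 else 0)
                  = (if i = j then 1 else 0) - (if b = j then 1 else 0) := by
                intro j
                by_cases h1 : i = j
                · subst h1
                  simp [mfB, hi, hib.symm]
                · by_cases h2 : b = j
                  · subst h2; simp [mfB, hib, hbs]
                  · simp [mfB, h1, h2, Ne.symm h1, Ne.symm h2]
              simp [this]
            · simp [mfB, hie]
          · simp [mfM_apply, hi, Pi.single_apply]
      · intro F hF
        rw [if_neg]
        rintro ⟨h, _⟩
        obtain ⟨u, v, hu, hv, he⟩ := h.exists_edge hs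
        exact hc ⟨u, v, hu, hv, Finset.mem_powerset.1 hF he⟩

/-- `s` is the complement of a set meeting every component. -/
def MFTrans {V : Type*} (G : SimpleGraph V) (s : Finset V) : Prop :=
  ∀ K : G.ConnectedComponent, ∃ r, r ∉ s ∧ G.connectedComponentMk r = K

lemma MFReach.trans {V : Type*} (G : SimpleGraph V) {s : Finset V} {F : Finset (Sym2 V)}
    (hF : (F : Set (Sym2 V)) ⊆ G.edgeSet) (h : MFReach s F) : MFTrans G s := by
  intro K
  induction K using SimpleGraph.ConnectedComponent.ind with
  | _ v =>
  obtain ⟨r, hr, h'⟩ := MFReach_iff.1 h v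
  refine ⟨r, hr, SimpleGraph.ConnectedComponent.eq.2 (h'.mono ?_)⟩
  intro a b hab
  rw [SimpleGraph.fromEdgeSet_adj] at hab
  exact hF hab.1

lemma MFTrans.card_le {V : Type*} [Fintype V] [DecidableEq V] {G : SimpleGraph V} {s : Finset V}
    (h : MFTrans G s) : Nat.card G.ConnectedComponent + s.card ≤ Fintype.card V := by
  choose f hf hf' using h
  have h1 : Nat.card G.ConnectedComponent ≤ (sᶜ).card := by
    have h2 := Nat.card_le_card_of_injective (fun K => (⟨f K, by simp [hf K]⟩ : (sᶜ : Finset V)))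
      (fun K K' hK => by
        rw [← hf' K, ← hf' K']
        exact congrArg _ (congrArg Subtype.val hK))
    rwa [Nat.card_eq_fintype_card (α := (sᶜ : Finset V)), Fintype.card_coe] at h2
  have := s.card_compl_add_card
  omega

lemma MFTrans.inj {V : Type*} [Fintype V] [DecidableEq V] {G : SimpleGraph V} {s : Finset V}
    (h : MFTrans G s) (hc : Nat.card G.ConnectedComponent + s.card = Fintype.card V) {x y : V}
    (hx : x ∉ s) (hy : y ∉ s) (hxy : G.Reachable x y) : x = y := by
  by_contra hne
  have h' : MFTrans G (insert x s) := by
    intro K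
    obtain ⟨r, hr, hK⟩ := h K
    by_cases hrx : r = x
    · refine ⟨y, by simp [hy, Ne.symm hne], ?_⟩
      rw [← hK, hrx, SimpleGraph.ConnectedComponent.eq]
      exact hxy.symm
    · exact ⟨r, by simp [hrx, hr], hK⟩
  have := h'.card_le
  rw [Finset.card_insert_of_notMem hx] at this
  omega

lemma good_iff {V : Type*} [Fintype V] [DecidableEq V] {G : SimpleGraph V} {s : Finset V}
    (h : MFTrans G s) (hc : Nat.card G.ConnectedComponent + s.card = Fintype.card V)
    {F : Finset (Sym2 V)} (hF : (F : Set (Sym2 V)) ⊆ G.edgeSet) :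
    (MFReach s F ∧ F.card = s.card) ↔ IsMaxSpanningForest G (F : Set (Sym2 V)) := by
  have hle : SimpleGraph.fromEdgeSet (F : Set (Sym2 V)) ≤ G := by
    intro a b hab
    rw [SimpleGraph.fromEdgeSet_adj] at hab
    exact hF hab.1
  have hes : (SimpleGraph.fromEdgeSet (F : Set (Sym2 V))).edgeSet = F := by
    rw [SimpleGraph.edgeSet_fromEdgeSet]
    ext e
    simp only [Set.mem_sdiff, Finset.mem_coe]
    refine ⟨fun h => h.1, fun h => ⟨h, fun hd => G.not_isDiag_of_mem_edgeSet (hF h) ?_⟩⟩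
    simpa using hd
  have hdel : ∀ e, (SimpleGraph.fromEdgeSet (F : Set (Sym2 V))).deleteEdges {e} =
      SimpleGraph.fromEdgeSet ((F.erase e : Finset (Sym2 V)) : Set (Sym2 V)) := by
    intro e
    ext x y
    simp only [SimpleGraph.deleteEdges_adj, SimpleGraph.fromEdgeSet_adj, Finset.coe_erase,
      Set.mem_sdiff, Set.mem_singleton_iff]
    tauto
  constructor
  · rintro ⟨hr, hcard⟩
    refine ⟨hF, ?_, ?_⟩
    · rw [SimpleGraph.isAcyclic_iff_forall_isBridge]
      intro e he
      by_contra hb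
      induction e using Sym2.ind with
      | _ a b =>
      rw [SimpleGraph.isBridge_iff] at hb
      rw [hes] at he
      have hr' : MFReach s (F.erase s(a, b)) := by
        rw [not_not, hdel] at hb
        intro S h1 h2
        refine hr S h1 ?_
        intro x y hxy hx
        by_cases hxe : s(x, y) = s(a, b)
        · rcases Sym2.eq_iff.1 hxe with ⟨rfl, rfl⟩ | ⟨rfl, rfl⟩
          · exact mf_closed h2 hb hx
          · exact mf_closed h2 hb.symm hx
        · exact h2 x y (by simp [hxe, hxy]) hx
      obtain ⟨F', hF', _, hF'c⟩ := MFReach.exists_subset _ s _ rfl hr'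
      have := Finset.card_le_card hF'
      rw [Finset.card_erase_of_mem he] at this
      have := Finset.card_pos.2 ⟨_, he⟩
      omega
    · have h1 := Nat.card_le_card_of_surjective _
        (SimpleGraph.ConnectedComponent.surjective_map_ofLE hle)
      have h2 := (hr.trans (SimpleGraph.fromEdgeSet (F : Set (Sym2 V))) hes.ge).card_le
      omega
  · rintro ⟨_, hac, hcc⟩
    have hinj : Function.Injective (SimpleGraph.ConnectedComponent.map
        (SimpleGraph.Hom.ofLE hle)) := by
      have hs := SimpleGraph.ConnectedComponent.surjective_map_ofLE hle
      exact (hs.bijective_of_nat_card_le hcc.le).1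
    have hreach : ∀ {x y}, G.Reachable x y →
        (SimpleGraph.fromEdgeSet (F : Set (Sym2 V))).Reachable x y := by
      intro x y hxy
      rw [← SimpleGraph.ConnectedComponent.eq]
      apply hinj
      exact SimpleGraph.ConnectedComponent.eq.2 hxy
    have hr : MFReach s F := by
      rw [MFReach_iff]
      intro x
      obtain ⟨r, hr, hK⟩ := h (G.connectedComponentMk x)
      exact ⟨r, hr, hreach (SimpleGraph.ConnectedComponent.eq.1 hK)⟩
    refine ⟨hr, ?_⟩
    obtain ⟨F', hF', hr', hF'c⟩ := MFReach.exists_subset _ s _ rfl hr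
    suffices F' = F by rw [← hF'c, this]
    refine Finset.Subset.antisymm hF' ?_
    intro e he
    by_contra heF'
    induction e using Sym2.ind with
    | _ a b =>
    rw [SimpleGraph.isAcyclic_iff_forall_isBridge] at hac
    have hb := hac (hes.ge he)
    rw [SimpleGraph.isBridge_iff] at hb
    rw [MFReach_iff] at hr'
    obtain ⟨r1, hr1, h1⟩ := hr' a
    obtain ⟨r2, hr2, h2⟩ := hr' b
    have hle' : SimpleGraph.fromEdgeSet (F' : Set (Sym2 V)) ≤
      SimpleGraph.fromEdgeSet (F : Set (Sym2 V)) := SimpleGraph.fromEdgeSet_mono (by simpa using hF')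
    have hab : G.Reachable a b := SimpleGraph.Adj.reachable (hF he)
    have : r1 = r2 := h.inj hc hr1 hr2
      (((h1.mono hle').mono hle).trans (hab.trans ((h2.mono hle').mono hle).symm))
    subst this
    refine hb ((h1.symm.trans h2).mono ?_)
    rw [hdel]
    refine SimpleGraph.fromEdgeSet_mono ?_
    rw [Finset.coe_subset]
    intro e' he'
    exact Finset.mem_erase.2 ⟨fun h => heF' (h ▸ he'), hF' he'⟩

lemma mf_forestCount {V : Type*} [Fintype V] [DecidableEq V] (G : SimpleGraph V)
    [DecidableRel G.Adj] [DecidablePred fun F : Finset (Sym2 V) =>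
      IsMaxSpanningForest G (F : Set (Sym2 V))] :
    forestCount G = (G.edgeFinset.powerset.filter
      (fun F : Finset (Sym2 V) => IsMaxSpanningForest G (F : Set (Sym2 V)))).card := by
  rw [← Set.ncard_coe_finset,
    ← Set.ncard_image_of_injective _ (Finset.coe_injective (α := Sym2 V))]
  change Set.ncard {T | IsMaxSpanningForest G T} = _
  congr 1
  ext T
  simp only [Set.mem_ofPred_eq, Set.mem_image, Finset.mem_coe, Finset.mem_filter,
    Finset.mem_powerset]
  constructor
  · intro h
    refine ⟨T.toFinite.toFinset, ⟨?_, by simpa using h⟩, by simp⟩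
    intro e he
    simpa using h.1 (by simpa using he)
  · rintro ⟨F, ⟨_, h⟩, rfl⟩
    exact h

lemma mf_forestCount_pos {V : Type*} [Fintype V] (G : SimpleGraph V) : 0 < forestCount G := by
  have : Nonempty {T : Set (Sym2 V) // IsMaxSpanningForest G T} := by
    obtain ⟨F, hF, hac, hr⟩ := G.exists_isAcyclic_reachable_eq_le
    refine ⟨F.edgeSet, SimpleGraph.edgeSet_mono hF, by simpa using hac, ?_⟩
    rw [SimpleGraph.fromEdgeSet_edgeSet]
    unfold SimpleGraph.ConnectedComponent
    rw [hr]
  exact Nat.card_pos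

lemma mf_minor {V : Type*} [Fintype V] [DecidableEq V] (G : SimpleGraph V) [DecidableRel G.Adj]
    (R : Type*) [CommRing R] [IsDomain R] {s : Finset V} (h : MFTrans G s)
    (hc : Nat.card G.ConnectedComponent + s.card = Fintype.card V) :
    ((G.lapMatrix R).submatrix (Subtype.val : s → V) (Subtype.val : s → V)).det
      = (forestCount G : R) := by
  classical
  rw [← Matrix.det_piecewise_one_eq_submatrix_det, ← mfL_lap]
  change (mfM R s G.edgeFinset).det = _
  rw [mfM_det R _ _ _ rfl (fun e he => G.not_isDiag_of_mem_edgeSet (by simpa using he)),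
    Finset.sum_boole, mf_forestCount]
  congr 2
  refine Finset.filter_congr fun F hF => good_iff h hc ?_
  intro e he
  simpa using Finset.mem_powerset.1 hF he

lemma mf_minor_zero {V : Type*} [Fintype V] [DecidableEq V] (G : SimpleGraph V)
    [DecidableRel G.Adj]
    (R : Type*) [CommRing R] [IsDomain R] {s : Finset V} (h : ¬ MFTrans G s) :
    ((G.lapMatrix R).submatrix (Subtype.val : s → V) (Subtype.val : s → V)).det = 0 := by
  classical
  rw [← Matrix.det_piecewise_one_eq_submatrix_det, ← mfL_lap]
  change (mfM R s G.edgeFinset).det = _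
  rw [mfM_det R _ _ _ rfl (fun e he => G.not_isDiag_of_mem_edgeSet (by simpa using he))]
  refine Finset.sum_eq_zero fun F hF => if_neg fun h' => h (h'.1.trans G ?_)
  intro e he
  simpa using Finset.mem_powerset.1 hF he

lemma mf_compl_section {V : Type*} [Fintype V] [DecidableEq V] (G : SimpleGraph V)
    [Fintype G.ConnectedComponent]
    (ρ : G.ConnectedComponent → V) (hρ : ∀ K, G.connectedComponentMk (ρ K) = K) :
    MFTrans G (Finset.univ.image ρ)ᶜ ∧
      Nat.card G.ConnectedComponent + (Finset.univ.image ρ)ᶜ.card = Fintype.card V := by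
  refine ⟨fun K => ⟨ρ K, by simp, hρ K⟩, ?_⟩
  have hinj : Function.Injective ρ := fun K K' h => by rw [← hρ K, ← hρ K', h]
  have := (Finset.univ.image ρ).card_compl_add_card
  rw [Finset.card_image_of_injective _ hinj, Finset.card_univ] at *
  rw [Nat.card_eq_fintype_card]
  omega

open scoped Classical in
lemma mf_sections {V : Type*} [Fintype V] [DecidableEq V] (G : SimpleGraph V) :
    ((Finset.univ.powersetCard (Fintype.card V - Nat.card G.ConnectedComponent)).filter
      (MFTrans G)).card =
      Nat.card {ρ : G.ConnectedComponent → V // ∀ K, G.connectedComponentMk (ρ K) = K} := by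
  symm
  rw [Nat.card_eq_fintype_card (α := {ρ : G.ConnectedComponent → V //
    ∀ K, G.connectedComponentMk (ρ K) = K}), ← Finset.card_univ]
  refine Finset.card_bij (fun ρ _ => (Finset.univ.image ρ.1)ᶜ) ?_ ?_ ?_
  · intro ρ _
    obtain ⟨h1, h2⟩ := mf_compl_section G ρ.1 ρ.2
    simp only [Finset.mem_filter, Finset.mem_powersetCard]
    exact ⟨⟨Finset.subset_univ _, by omega⟩, h1⟩
  · rintro ⟨ρ, hρ⟩ _ ⟨ρ', hρ'⟩ _ h
    have h' := compl_injective h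
    simp only at h'
    ext K
    have : ρ K ∈ Finset.univ.image ρ' := h' ▸ Finset.mem_image_of_mem _ (Finset.mem_univ _)
    obtain ⟨K', _, hK'⟩ := Finset.mem_image.1 this
    have : K' = K := by rw [← hρ' K', hK', hρ]
    simp [← hK', this]
  · intro s hs
    simp only [Finset.mem_filter, Finset.mem_powersetCard] at hs
    obtain ⟨⟨_, hc⟩, ht⟩ := hs
    have hle := ht.card_le
    choose f hf hf' using ht
    refine ⟨⟨f, hf'⟩, Finset.mem_univ _, ?_⟩
    obtain ⟨h1, h2⟩ := mf_compl_section G f hf'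
    symm
    refine Finset.eq_of_subset_of_card_le ?_ (by simp only; omega)
    intro x hx
    simp only [Finset.mem_compl, Finset.mem_image, Finset.mem_univ, true_and, not_exists]
    intro K hK
    exact hf K (hK ▸ hx)

lemma mf_sections_card {V : Type*} [Fintype V] [DecidableEq V] (G : SimpleGraph V) :
    (Nat.card {ρ : G.ConnectedComponent → V // ∀ K, G.connectedComponentMk (ρ K) = K} : ℂ) =
      ∏ᶠ K : G.ConnectedComponent, (Nat.card K.supp : ℂ) := by
  classical
  rw [finprod_eq_prod_of_fintype,
    Nat.card_congr (Equiv.subtypePiEquivPi (p := fun K v => G.connectedComponentMk v = K)),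
    Nat.card_pi]
  push_cast
  rfl

lemma mf_poly (p : Polynomial ℂ) (hp : p.Monic) (c : ℕ) (h0 : ∀ j < c, p.coeff j = 0)
    (hc : p.coeff c ≠ 0) :
    (p.roots.filter (· ≠ 0)).prod = (-1) ^ (p.natDegree - c) * p.coeff c := by
  obtain ⟨q, rfl⟩ := Polynomial.X_pow_dvd_iff.2 h0
  have hq : q.Monic := (Polynomial.monic_X_pow c).of_mul_monic_left hp
  have hcoeff : (Polynomial.X ^ c * q).coeff c = q.coeff 0 := by
    simpa using Polynomial.coeff_X_pow_mul q c 0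
  rw [hcoeff] at hc ⊢
  have hdeg : (Polynomial.X ^ c * q).natDegree - c = q.natDegree := by
    rw [(Polynomial.monic_X_pow c).natDegree_mul hq]; simp
  rw [hdeg, Polynomial.roots_mul hp.ne_zero, Polynomial.roots_X_pow, Multiset.filter_add]
  have h1 : Multiset.filter (· ≠ (0 : ℂ)) (c • {0}) = 0 := by
    rw [Multiset.filter_eq_nil]
    intro a ha
    simpa using Multiset.mem_of_mem_nsmul ha
  have h2 : Multiset.filter (· ≠ (0 : ℂ)) q.roots = q.roots := by
    rw [Multiset.filter_eq_self]
    rintro a ha rfl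
    apply hc
    rw [Polynomial.coeff_zero_eq_eval_zero]
    exact (Polynomial.mem_roots'.1 ha).2
  rw [h1, h2, zero_add,
    (IsAlgClosed.splits q).coeff_zero_eq_prod_roots_of_monic hq, ← mul_assoc, ← mul_pow]
  simp

lemma mf_main {V : Type*} [Fintype V] [DecidableEq V]
    (G : SimpleGraph V) [DecidableRel G.Adj] :
    ((SimpleGraph.lapMatrix ℂ G).charpoly.roots.filter (· ≠ 0)).prod =
      (Nat.card {ρ : G.ConnectedComponent → V // ∀ K, G.connectedComponentMk (ρ K) = K} : ℂ) *
        (forestCount G : ℂ) := by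
  classical
  have hcn : Nat.card G.ConnectedComponent ≤ Fintype.card V := by
    rw [← Nat.card_eq_fintype_card]
    exact Nat.card_le_card_of_surjective G.connectedComponentMk
      (fun K => K.ind (fun v => ⟨v, rfl⟩))
  have hcoeffc : (G.lapMatrix ℂ).charpoly.coeff (Nat.card G.ConnectedComponent) =
      (-1) ^ (Fintype.card V - Nat.card G.ConnectedComponent) *
      ((Nat.card {ρ : G.ConnectedComponent → V // ∀ K, G.connectedComponentMk (ρ K) = K} : ℂ) *
        (forestCount G : ℂ)) := by
    have := Matrix.charpoly_coeff_eq_sum_minors (G.lapMatrix ℂ)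
      (Fintype.card V - Nat.card G.ConnectedComponent) (Nat.sub_le _ _)
    rw [Nat.sub_sub_self hcn] at this
    rw [this, ← mf_sections G, ← nsmul_eq_mul, ← Finset.sum_const, Finset.sum_filter]
    congr 1
    refine Finset.sum_congr rfl fun s hs => ?_
    have hs' := (Finset.mem_powersetCard.1 hs).2
    split_ifs with h
    · exact mf_minor G ℂ h (by omega)
    · exact mf_minor_zero G ℂ h
  have hcoeff0 : ∀ j < Nat.card G.ConnectedComponent, (G.lapMatrix ℂ).charpoly.coeff j = 0 := by
    intro j hj
    have := Matrix.charpoly_coeff_eq_sum_minors (G.lapMatrix ℂ)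
      (Fintype.card V - j) (Nat.sub_le _ _)
    rw [Nat.sub_sub_self (by omega)] at this
    rw [this, Finset.sum_eq_zero, mul_zero]
    intro s hs
    have hs' := (Finset.mem_powersetCard.1 hs).2
    refine mf_minor_zero G ℂ fun h => ?_
    have := h.card_le
    omega
  have hsec : Nat.card {ρ : G.ConnectedComponent → V // ∀ K, G.connectedComponentMk (ρ K) = K}
      ≠ 0 := by
    have : Nonempty {ρ : G.ConnectedComponent → V // ∀ K, G.connectedComponentMk (ρ K) = K} :=
      ⟨fun K => K.out, fun K => Quot.out_eq K⟩
    exact Nat.card_pos.ne'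
  have hpos := (mf_forestCount_pos G).ne'
  rw [mf_poly _ (Matrix.charpoly_monic _) _ hcoeff0, Matrix.charpoly_natDegree_eq_dim, hcoeffc,
    ← mul_assoc, ← mul_pow]
  · simp
  · rw [hcoeffc]
    refine mul_ne_zero (pow_ne_zero _ (by norm_num)) (mul_ne_zero ?_ ?_) <;> exact_mod_cast ‹_›

/-- **The Matrix-Forest Theorem for possibly disconnected graphs.**
(1) The product of the nonzero Laplacian eigenvalues (with algebraic multiplicity) equals
`n_1 ⋯ n_c · τ(G)`, where the `n_i` are the orders of the connected components;
(2) for any choice `ρ` of one vertex from each component, `τ(G)` is the determinant of the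
Laplacian with the corresponding `c` rows and columns deleted; and
(3) the number of rooted maximal spanning forests equals the product of the nonzero
Laplacian eigenvalues. -/
theorem matrix_forest_theorem {V : Type*} [Fintype V] [DecidableEq V]
    (G : SimpleGraph V) [DecidableRel G.Adj] :
    (((SimpleGraph.lapMatrix ℂ G).charpoly.roots.filter (· ≠ 0)).prod =
        (∏ᶠ K : G.ConnectedComponent, (Nat.card K.supp : ℂ)) * (forestCount G : ℂ)) ∧
    (∀ ρ : G.ConnectedComponent → V, (∀ K, G.connectedComponentMk (ρ K) = K) →
      (forestCount G : ℤ) =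
        ((SimpleGraph.lapMatrix ℤ G).submatrix
          (Subtype.val : {v : V // v ∉ Set.range ρ} → V) Subtype.val).det) ∧
    ((Nat.card {p : Set (Sym2 V) × (G.ConnectedComponent → V) //
        IsMaxSpanningForest G p.1 ∧ ∀ K, G.connectedComponentMk (p.2 K) = K} : ℂ) =
      ((SimpleGraph.lapMatrix ℂ G).charpoly.roots.filter (· ≠ 0)).prod) := by
  
  refine ⟨?_, ?_, ?_⟩
  · rw [mf_main, mf_sections_card]
  · classical
    intro ρ hρ
    obtain ⟨h1, h2⟩ := mf_compl_section G ρ hρ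
    rw [← mf_minor G ℤ h1 h2]
    let e : {v : V // v ∉ Set.range ρ} ≃ ((Finset.univ.image ρ)ᶜ : Finset V) :=
      Equiv.subtypeEquivRight (fun v => by simp)
    rw [← Matrix.det_submatrix_equiv_self e]
    rfl
  · rw [mf_main, mul_comm, ← Nat.cast_mul, forestCount, ← Nat.card_prod]
    congr 1
    exact Nat.card_congr (Equiv.subtypeProdEquivProd
      (p := fun T => IsMaxSpanningForest G T)
      (q := fun ρ : G.ConnectedComponent → V => ∀ K, G.connectedComponentMk (ρ K) = K))
end

section
/- For all positive integers m and n, the number of spanning trees of the complete bipartite graph K_{m,n} equals n^{m−1}·m^{n−1}. -/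
/-- `f` is a parent function on `G` with root `r`. -/
def IsParentFun {V : Type*} (G : SimpleGraph V) (r : V) (f : V → V) : Prop :=
  f r = r ∧ (∀ v, v ≠ r → G.Adj v (f v)) ∧ ∀ v, ∃ k, f^[k] v = r

/-- The edges of a parent function. -/
def parentEdges {V : Type*} (r : V) (f : V → V) : Set (Sym2 V) :=
  (fun v => s(v, f v)) '' {v | v ≠ r}

theorem closed_iterate {V : Type*} {f : V → V} {S : Set V} (hS : ∀ v ∈ S, f v ∈ S) :
    ∀ (k : ℕ) (v : V), v ∈ S → f^[k] v ∈ S := by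
  intro k
  induction k with
  | zero => intro v hv; simpa using hv
  | succ k ih => intro v hv; rw [Function.iterate_succ_apply]; exact ih _ (hS _ hv)

theorem parentEdges_connected {V : Type*} {r : V} {f : V → V}
    (hne : ∀ v, v ≠ r → v ≠ f v) (hk : ∀ v, ∃ k, f^[k] v = r) :
    (SimpleGraph.fromEdgeSet (parentEdges r f)).Connected := by
  have key : ∀ (k : ℕ) (v : V), f^[k] v = r →
      (SimpleGraph.fromEdgeSet (parentEdges r f)).Reachable v r := by
    intro k
    induction k with
    | zero => intro v hv; simp at hv; subst hv; exact SimpleGraph.Reachable.refl _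
    | succ k ih =>
      intro v hv
      by_cases h : v = r
      · subst h; exact SimpleGraph.Reachable.refl _
      · rw [Function.iterate_succ_apply] at hv
        refine SimpleGraph.Reachable.trans (SimpleGraph.Adj.reachable ?_) (ih _ hv)
        rw [SimpleGraph.fromEdgeSet_adj]
        exact ⟨⟨v, h, rfl⟩, hne v h⟩
  have : Nonempty V := ⟨r⟩
  refine SimpleGraph.Connected.mk ?_
  intro u v
  obtain ⟨a, ha⟩ := hk u
  obtain ⟨b, hb⟩ := hk v
  exact (key a u ha).trans (key b v hb).symm

theorem edgeSet_parentEdges {V : Type*} {r : V} {f : V → V}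
    (hne : ∀ v, v ≠ r → v ≠ f v) :
    (SimpleGraph.fromEdgeSet (parentEdges r f)).edgeSet = parentEdges r f := by
  rw [SimpleGraph.edgeSet_fromEdgeSet]
  ext e
  constructor
  · exact fun h => h.1
  · intro h
    refine ⟨h, ?_⟩
    obtain ⟨v, hv, rfl⟩ := h
    simpa using hne v hv

theorem parentEdges_isSpanningTree {V : Type*} [Finite V] {G : SimpleGraph V} {r : V} {f : V → V}
    (hf : IsParentFun G r f) : IsSpanningTree G (parentEdges r f) := by
  obtain ⟨h1, h2, h3⟩ := hf
  have hne : ∀ v, v ≠ r → v ≠ f v := fun v hv => (h2 v hv).ne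
  have hc := parentEdges_connected hne h3
  refine ⟨?_, hc, ?_⟩
  · rintro _ ⟨v, hv, rfl⟩
    exact h2 v hv
  · refine (SimpleGraph.isTree_iff_connected_and_card.2 ⟨hc, ?_⟩).isAcyclic
    refine le_antisymm ?_ hc.card_vert_le_card_edgeSet_add_one
    rw [edgeSet_parentEdges hne]
    have h4 : Nat.card (parentEdges r f) ≤ Nat.card {v | v ≠ r} :=
      Set.ncard_image_le (Set.toFinite _)
    have h5 : Nat.card {v | v ≠ r} < Nat.card V := by
      have := Set.ncard_lt_card (s := {v | v ≠ r}) (by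
        intro h
        have : r ∈ {v | v ≠ r} := by rw [h]; trivial
        exact this rfl)
      exact this
    omega

theorem parentEdges_inj {V : Type*} {G : SimpleGraph V} {r : V} {f g : V → V}
    (hf : IsParentFun G r f) (hg : IsParentFun G r g)
    (h : parentEdges r f = parentEdges r g) : f = g := by
  have hcl : ∀ S : Set V, (∀ v ∈ S, g v ∈ S) → r ∉ S → ∀ v, v ∉ S := by
    intro S hS hr v hv
    obtain ⟨k, hk⟩ := hg.2.2 v
    exact hr (hk ▸ closed_iterate hS k v hv)
  have hD := hcl {u | f u ≠ g u} ?_ ?_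
  · funext u
    by_contra hu
    exact hD u hu
  · intro u hu
    have hur : u ≠ r := by
      rintro rfl
      exact hu (hf.1.trans hg.1.symm)
    have hmem : s(u, g u) ∈ parentEdges r f := by
      rw [h]; exact ⟨u, hur, rfl⟩
    obtain ⟨v, hv, hve⟩ := hmem
    simp only [Sym2.eq_iff] at hve
    rcases hve with ⟨rfl, h2⟩ | ⟨rfl, h2⟩
    · exact absurd h2 hu
    · intro h3
      have h4 : g (g u) = u := by rw [← h3, h2]
      refine hcl {u, g u} ?_ ?_ u (by simp)
      · rintro w (rfl | rfl)
        · simp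
        · simp [h4]
      · rintro (h5 | h5)
        · exact hur h5.symm
        · exact hv h5.symm
  · intro h1
    exact h1 (hf.1.trans hg.1.symm)

theorem exists_parentFun {V : Type*} {G : SimpleGraph V} (r : V)
    {T : Set (Sym2 V)} (hT : IsSpanningTree G T) :
    ∃ f, IsParentFun G r f ∧ parentEdges r f = T := by
  classical
  obtain ⟨hTG, hc, ha⟩ := hT
  set H := SimpleGraph.fromEdgeSet T with hH
  have hex : ∀ v, ∃ w, (v = r → w = r) ∧ (v ≠ r → H.Adj v w ∧ H.dist w r < H.dist v r) := by
    intro v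
    by_cases hv : v = r
    · exact ⟨r, by simp [hv]⟩
    · obtain ⟨p, hp⟩ := hc.exists_walk_length_eq_dist v r
      cases p with
      | nil => exact absurd rfl hv
      | cons hadj q =>
        refine ⟨_, fun h => absurd h hv, fun _ => ⟨hadj, ?_⟩⟩
        have := SimpleGraph.dist_le q
        rw [SimpleGraph.Walk.length_cons] at hp
        omega
  choose f hf1 hf2 using hex
  have hTadj : ∀ v w, H.Adj v w → s(v, w) ∈ T := by
    intro v w hvw
    rw [hH, SimpleGraph.fromEdgeSet_adj] at hvw
    exact hvw.1
  have hreach : ∀ (d : ℕ) (v : V), H.dist v r ≤ d → ∃ k, f^[k] v = r := by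
    intro d
    induction d with
    | zero =>
      intro v hv
      exact ⟨0, (hc.dist_eq_zero_iff).1 (Nat.le_zero.1 hv)⟩
    | succ d ih =>
      intro v hv
      by_cases h : v = r
      · exact ⟨0, h⟩
      · obtain ⟨k, hk⟩ := ih (f v) (by have := (hf2 v h).2; omega)
        exact ⟨k + 1, by rw [Function.iterate_succ_apply]; exact hk⟩
  have hP : IsParentFun G r f :=
    ⟨hf1 r rfl, fun v hv => hTG (hTadj _ _ (hf2 v hv).1), fun v => hreach _ v le_rfl⟩
  refine ⟨f, hP, ?_⟩
  have hsub : parentEdges r f ⊆ T := by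
    rintro _ ⟨v, hv, rfl⟩
    exact hTadj _ _ (hf2 v hv).1
  refine Set.Subset.antisymm hsub ?_
  have hmin := (SimpleGraph.isTree_iff_minimal_connected (G := H)).1 ⟨hc, ha⟩
  have hne : ∀ v, v ≠ r → v ≠ f v := fun v hv => (hP.2.1 v hv).ne
  have hle := hmin.2 (parentEdges_connected hne hP.2.2) (SimpleGraph.fromEdgeSet_mono hsub)
  intro e he
  have heH : e ∈ H.edgeSet := by
    rw [hH, SimpleGraph.edgeSet_fromEdgeSet]
    exact ⟨he, G.not_isDiag_of_mem_edgeSet (hTG he)⟩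
  have := SimpleGraph.edgeSet_mono hle heH
  rwa [edgeSet_parentEdges hne] at this

theorem treeCount_eq {V : Type*} [Finite V] (G : SimpleGraph V) (r : V) :
    treeCount G = Nat.card {f : V → V // IsParentFun G r f} := by
  symm
  refine Nat.card_congr (Equiv.ofBijective
    (fun f => ⟨parentEdges r f.1, parentEdges_isSpanningTree f.2⟩) ⟨?_, ?_⟩)
  · intro f g h
    exact Subtype.ext (parentEdges_inj f.2 g.2 (congrArg Subtype.val h))
  · rintro ⟨T, hT⟩
    obtain ⟨f, hf, h⟩ := exists_parentFun r hT
    exact ⟨⟨f, hf⟩, Subtype.ext h⟩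

/-- Row of the reduced Laplacian contributed by the arc `v → w`. -/
def arcRow {V : Type*} [DecidableEq V] (r v w : V) : V → ℚ :=
  fun x => (if x = v then 1 else 0) - (if v ≠ r ∧ x = w then 1 else 0)

theorem det_reach {V : Type*} [Fintype V] [DecidableEq V] (r : V) (f : V → V) (h : ∀ v, ∃ k, f^[k] v = r) :
    Matrix.det (Matrix.of fun v => arcRow r v (f v)) = 1 := by
  classical
  let d : V → ℕ := fun v => Nat.find (h v)
  have hd : ∀ v, v ≠ r → d (f v) < d v := by
    intro v hv
    have h1 : f^[d v] v = r := Nat.find_spec (h v)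
    have h0 : d v ≠ 0 := by
      intro h0
      rw [h0] at h1
      exact hv h1
    obtain ⟨k, hk⟩ := Nat.exists_eq_succ_of_ne_zero h0
    rw [hk, Function.iterate_succ_apply] at h1
    have h2 : d (f v) ≤ k := Nat.find_min' _ h1
    omega
  have hbt : Matrix.BlockTriangular (Matrix.of fun v => arcRow r v (f v))
      (fun v => OrderDual.toDual (d v)) := by
    intro i j hij
    have hij' : d i < d j := hij
    have h1 : j ≠ i := by rintro rfl; exact lt_irrefl _ hij'
    have h2 : ¬ (i ≠ r ∧ j = f i) := by
      rintro ⟨h3, rfl⟩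
      exact absurd (hd i h3) (by omega)
    simp only [Matrix.of_apply, arcRow, if_neg h1, if_neg h2, sub_zero]
  rw [hbt.det]
  refine Finset.prod_eq_one fun a _ => ?_
  have : (Matrix.of fun v => arcRow r v (f v)).toSquareBlock
      (fun v => OrderDual.toDual (d v)) a = 1 := by
    ext ⟨i, hi⟩ ⟨j, hj⟩
    have hij : d i = d j := OrderDual.toDual.injective (hi.trans hj.symm)
    have h2 : ¬ (i ≠ r ∧ j = f i) := by
      rintro ⟨h3, rfl⟩
      exact absurd (hd i h3) (by omega)
    simp only [Matrix.toSquareBlock_def, Matrix.of_apply, arcRow, if_neg h2, sub_zero,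
      Matrix.one_apply, Subtype.mk.injEq, eq_comm]
  rw [this, Matrix.det_one]

theorem det_not_reach {V : Type*} [Fintype V] [DecidableEq V] (r : V) (f : V → V)
    (hr : f r = r) (h : ¬ ∀ v, ∃ k, f^[k] v = r) :
    Matrix.det (Matrix.of fun v => arcRow r v (f v)) = 0 := by
  classical
  rw [← Matrix.exists_mulVec_eq_zero_iff]
  push Not at h
  obtain ⟨u, hu⟩ := h
  refine ⟨fun v => if ∃ k, f^[k] v = r then 0 else 1, ?_, ?_⟩
  · intro h0
    have := congrFun h0 u
    have hn : ¬ ∃ k, f^[k] u = r := by push Not; exact hu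
    simp [hn] at this
  · funext v
    simp only [Matrix.mulVec, dotProduct, Matrix.of_apply, arcRow, sub_mul, ite_mul, one_mul,
      zero_mul, Finset.sum_sub_distrib, Pi.zero_apply]
    by_cases hv : v = r
    · subst hv
      have : ∃ k, f^[k] v = v := ⟨0, rfl⟩
      simp [this]
    · have hiff : (∃ k, f^[k] v = r) ↔ ∃ k, f^[k] (f v) = r := by
        constructor
        · rintro ⟨k, hk⟩
          refine ⟨k, ?_⟩
          rw [← Function.iterate_succ_apply, Function.iterate_succ_apply', hk, hr]
        · rintro ⟨k, hk⟩
          exact ⟨k + 1, by rw [Function.iterate_succ_apply]; exact hk⟩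
      simp only [ne_eq, hv, not_false_eq_true, true_and, Finset.sum_ite_eq', Finset.mem_univ,
        if_true, hiff, sub_self]

theorem treeCount_eq_det {V : Type*} [Fintype V] [DecidableEq V] (G : SimpleGraph V)
    [DecidableRel G.Adj] (r : V) :
    (treeCount G : ℚ) = Matrix.det (Matrix.of fun v =>
      ∑ w ∈ (if v = r then {r} else Finset.univ.filter (G.Adj v)), arcRow r v w) := by
  classical
  rw [treeCount_eq G r]
  have h1 := (Matrix.detRowAlternating (R := ℚ) (n := V)).toMultilinearMap.map_sum_finset
    (fun v w => arcRow r v w)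
    (fun v => if v = r then {r} else Finset.univ.filter (G.Adj v))
  refine Eq.trans ?_ h1.symm
  have h2 : ∀ f ∈ Fintype.piFinset
      (fun v => if v = r then {r} else Finset.univ.filter (G.Adj v)),
      (Matrix.detRowAlternating (R := ℚ) (n := V)).toMultilinearMap
        (fun v => arcRow r v (f v)) = if IsParentFun G r f then 1 else 0 := by
    intro f hf
    rw [Fintype.mem_piFinset] at hf
    have hr : f r = r := by simpa using hf r
    have hadj : ∀ v, v ≠ r → G.Adj v (f v) := by
      intro v hv
      simpa [hv] using hf v
    split_ifs with h
    · exact det_reach r f h.2.2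
    · exact det_not_reach r f hr (fun h' => h ⟨hr, hadj, h'⟩)
  rw [Finset.sum_congr rfl h2, Finset.sum_boole, Nat.card_eq_fintype_card, Fintype.card_subtype]
  congr 2
  ext f
  simp only [Finset.mem_filter, Finset.mem_univ, true_and, Fintype.mem_piFinset]
  constructor
  · intro h
    refine ⟨fun v => ?_, h⟩
    by_cases hv : v = r
    · subst hv; simpa using h.1
    · simpa [hv] using h.2.1 v hv
  · exact fun h => h.2

open Classical in
theorem laplacian_blocks (m n : ℕ) (a : Fin m) :
    (Matrix.of fun v : Fin m ⊕ Fin n =>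
      ∑ w ∈ (if v = Sum.inl a then {Sum.inl a} else Finset.univ.filter
        ((completeBipartiteGraph (Fin m) (Fin n)).Adj v)), arcRow (Sum.inl a) v w) =
    Matrix.fromBlocks (Matrix.diagonal fun i => if i = a then 1 else (n : ℚ))
      (Matrix.of fun i _ => if i = a then 0 else -1)
      (Matrix.of fun _ _ => -1)
      ((m : ℚ) • (1 : Matrix (Fin n) (Fin n) ℚ)) := by
  ext v x
  rw [Matrix.of_apply, Finset.sum_apply]
  by_cases hv : v = Sum.inl a
  · subst hv
    rcases x with x | x <;> simp [arcRow, Matrix.diagonal_apply, eq_comm]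
  · rw [if_neg hv, Finset.sum_filter]
    rcases v with v | v
    · have hva : v ≠ a := fun h => hv (by rw [h])
      rcases x with x | x
      · by_cases hx : x = v
        · subst hx
          simp [arcRow, Matrix.diagonal_apply, hva]
        · simp [arcRow, Matrix.diagonal_apply, hva, hx, Ne.symm hx]
      · simp [arcRow, hva]
    · rcases x with x | x
      · simp [arcRow]
      · by_cases hx : x = v
        · subst hx
          simp [arcRow, Matrix.one_apply]
        · simp [arcRow, Matrix.one_apply, hx, Ne.symm hx]

theorem det_blocks (m n : ℕ) (hm : 0 < m) (hn : 0 < n) (a : Fin m) :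
    (Matrix.fromBlocks (Matrix.diagonal fun i => if i = a then 1 else (n : ℚ))
      (Matrix.of fun i _ => if i = a then 0 else -1)
      (Matrix.of fun _ _ => -1)
      ((m : ℚ) • (1 : Matrix (Fin n) (Fin n) ℚ))).det = (n : ℚ) ^ (m - 1) * (m : ℚ) ^ (n - 1) := by
  have hn0 : (n : ℚ) ≠ 0 := by positivity
  have hm0 : (m : ℚ) ≠ 0 := by positivity
  let D : Matrix (Fin m) (Fin m) ℚ := Matrix.diagonal fun i => if i = a then 1 else (n : ℚ)
  let E : Matrix (Fin m) (Fin m) ℚ := Matrix.diagonal fun i => if i = a then 1 else (n : ℚ)⁻¹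
  have hED : E * D = 1 := by
    simp only [D, E, Matrix.diagonal_mul_diagonal]
    rw [← Matrix.diagonal_one]
    congr 1
    funext i
    split_ifs <;> simp [hn0]
  have hDE : D * E = 1 := mul_eq_one_comm.1 hED
  let _ : Invertible D := ⟨E, hED, hDE⟩
  have hinv : ⅟D = E := rfl
  change (Matrix.fromBlocks D _ _ _).det = _
  rw [Matrix.det_fromBlocks₁₁, hinv]
  have hD : D.det = (n : ℚ) ^ (m - 1) := by
    simp only [D, Matrix.det_diagonal]
    rw [Finset.prod_ite]
    simp [Finset.filter_ne', Finset.card_erase_of_mem]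
  have hS : (m : ℚ) • (1 : Matrix (Fin n) (Fin n) ℚ) -
      (Matrix.of fun (_ : Fin n) (_ : Fin m) => (-1 : ℚ)) * E *
        (Matrix.of fun i (_ : Fin n) => if i = a then (0 : ℚ) else -1) =
      (m : ℚ) • (1 + Matrix.replicateCol Unit (fun _ : Fin n => (1 : ℚ)) *
        Matrix.replicateRow Unit (fun _ : Fin n => -((m - 1 : ℚ) / (n * m)))) := by
    ext i j
    have : ∑ x : Fin m, (if x = a then (0 : ℚ) else (n : ℚ)⁻¹) = (m - 1) * (n : ℚ)⁻¹ := by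
      rw [Finset.sum_ite]
      simp [Finset.filter_ne', Finset.card_erase_of_mem, Nat.cast_sub (show 1 ≤ m from hm)]
    have h2 : ((Matrix.of fun (_ : Fin n) (_ : Fin m) => (-1 : ℚ)) * E *
        (Matrix.of fun i (_ : Fin n) => if i = a then (0 : ℚ) else -1)) i j = (m - 1) * (n : ℚ)⁻¹ := by
      rw [← this, Matrix.mul_apply]
      refine Finset.sum_congr rfl fun x _ => ?_
      simp only [E, Matrix.mul_diagonal, Matrix.of_apply]
      split_ifs <;> simp
    rw [Matrix.sub_apply, h2]
    simp only [Matrix.smul_apply, Matrix.add_apply, Matrix.mul_apply, smul_eq_mul,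
      Matrix.replicateCol_apply, Matrix.replicateRow_apply, Finset.univ_unique,
      Finset.sum_singleton]
    field_simp
    ring
  rw [hD, hS, Matrix.det_smul, Matrix.det_one_add_replicateCol_mul_replicateRow]
  congr 1
  simp only [dotProduct, Finset.sum_const, Finset.card_univ, Fintype.card_fin, nsmul_eq_mul]
  obtain ⟨k, rfl⟩ := Nat.exists_eq_succ_of_ne_zero hn.ne'
  rw [Nat.succ_sub_one, pow_succ]
  field_simp
  ring

/-- The complete bipartite graph `K_{m,n}` has `n^(m-1) · m^(n-1)` spanning trees. -/
theorem completeBipartite_tree_count (m n : ℕ) (hm : 0 < m) (hn : 0 < n) :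
    treeCount (completeBipartiteGraph (Fin m) (Fin n)) = n ^ (m - 1) * m ^ (n - 1) := by
  classical
  have h := treeCount_eq_det (completeBipartiteGraph (Fin m) (Fin n)) (Sum.inl ⟨0, hm⟩)
  have h2 := laplacian_blocks m n ⟨0, hm⟩
  have h3 := det_blocks m n hm hn ⟨0, hm⟩
  have h4 : (treeCount (completeBipartiteGraph (Fin m) (Fin n)) : ℚ) =
      (n : ℚ) ^ (m - 1) * (m : ℚ) ^ (n - 1) := by
    rw [h, ← h3, ← h2]
  exact_mod_cast h4
end

section
/- Fix integers n ≥ 2 and 1 ≤ d ≤ n−1. Call a set T ⊆ F_d a simplicial spanning tree of the d-skeleton Δ_{n,d} of the n-vertex simplex if |T| = C(n−1,d) and the columns of ∂_d indexed by T are linearly independent over ℚ. For every such T, the abelian group H(T) := ker_ℤ(∂_{d−1}) / (the subgroup of ℤ^{F_{d−1}} generated by the columns of ∂_d indexed by T) is finite, and Kalai's formula holds: the sum over all simplicial spanning trees T of |H(T)|² equals n^{C(n−2,d)}. -/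
open Matrix

/-- The `k`-th simplicial boundary matrix of the simplex on vertex set `Fin n`:
rows are indexed by `k`-element subsets, columns by `(k+1)`-element subsets; the entry in
position `(σ, τ)` is `(-1)^i` if `σ = τ ∖ {x}` where `x` is the `i`-th smallest element of
`τ`, and `0` otherwise.  (`k = 0` gives the all-ones augmentation row `∂_0`.) -/
def simplexBdry (n k : ℕ) :
    Matrix {σ : Finset (Fin n) // σ.card = k} {τ : Finset (Fin n) // τ.card = k + 1} ℤ :=
  fun σ τ => ∑ x ∈ τ.1,
    if σ.1 = τ.1.erase x then (-1 : ℤ) ^ ((τ.1.filter (· < x)).card) else 0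

/-- `T` is a simplicial spanning tree of the `d`-skeleton `Δ_{n,d}` (here `d = e + 1`):
`T` is a set of `d`-dimensional faces with `|T| = C(n-1, d)` whose columns of `∂_d` are
linearly independent over `ℚ`. -/
def IsSST (n e : ℕ) (T : Finset {τ : Finset (Fin n) // τ.card = (e + 1) + 1}) : Prop :=
  T.card = Nat.choose (n - 1) (e + 1) ∧
    LinearIndependent ℚ (fun τ : T => fun σ => ((simplexBdry n (e + 1) σ τ.1 : ℤ) : ℚ))

/-- The group `H(T) = ker_ℤ(∂_{d-1}) / (subgroup generated by the columns of `∂_d`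
indexed by `T`)`, for `d = e + 1`. -/
def KalaiH (n e : ℕ) (T : Finset {τ : Finset (Fin n) // τ.card = (e + 1) + 1}) : Type _ :=
  LinearMap.ker (simplexBdry n e).mulVecLin ⧸
    Submodule.comap (LinearMap.ker (simplexBdry n e).mulVecLin).subtype
      (Submodule.span ℤ ((fun τ => (simplexBdry n (e + 1))ᵀ τ) '' ↑T))

noncomputable instance (n e : ℕ) (T : Finset {τ : Finset (Fin n) // τ.card = (e + 1) + 1}) :
    AddCommGroup (KalaiH n e T) := by
  unfold KalaiH; infer_instance


namespace Kalai

/-- The total boundary matrix on all subsets. -/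
def D (m : ℕ) : Matrix (Finset (Fin m)) (Finset (Fin m)) ℤ :=
  fun σ τ => ∑ x ∈ τ, if σ = τ.erase x then (-1 : ℤ) ^ ((τ.filter (· < x)).card) else 0

/-- Shift of a subset. -/
def L {m : ℕ} (s : Finset (Fin m)) : Finset (Fin (m + 1)) := s.map (Fin.succEmb m)

/-- Cone over the shift of a subset. -/
def Z {m : ℕ} (s : Finset (Fin m)) : Finset (Fin (m + 1)) := insert 0 (L s)

lemma zero_notMem_L {m : ℕ} (s : Finset (Fin m)) : (0 : Fin (m + 1)) ∉ L s := by
  simp [L]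

lemma zero_mem_Z {m : ℕ} (s : Finset (Fin m)) : (0 : Fin (m + 1)) ∈ Z s := by
  simp [Z]

lemma L_inj {m : ℕ} {s t : Finset (Fin m)} : L s = L t ↔ s = t := by
  simp [L]

lemma Z_inj {m : ℕ} {s t : Finset (Fin m)} : Z s = Z t ↔ s = t := by
  constructor
  · intro h
    have := congrArg (fun u => u.erase 0) h
    simp only [Z, Finset.erase_insert (zero_notMem_L _)] at this
    exact L_inj.1 this
  · rintro rfl; rfl

lemma L_ne_Z {m : ℕ} (s t : Finset (Fin m)) : L s ≠ Z t := by
  intro h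
  exact zero_notMem_L s (h ▸ zero_mem_Z t)

lemma card_L {m : ℕ} (s : Finset (Fin m)) : (L s).card = s.card := by simp [L]

lemma card_Z {m : ℕ} (s : Finset (Fin m)) : (Z s).card = s.card + 1 := by
  rw [Z, Finset.card_insert_of_notMem (zero_notMem_L s), card_L]

lemma exists_ZL {m : ℕ} (u : Finset (Fin (m + 1))) : (∃ s, u = Z s) ∨ (∃ s, u = L s) := by
  have key : ∀ v : Finset (Fin (m + 1)), 0 ∉ v → ∃ s, v = L s := by
    intro v hv
    refine ⟨Finset.univ.filter (fun x => Fin.succ x ∈ v), ?_⟩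
    ext x
    refine Fin.cases ?_ (fun y => ?_) x
    · simp [hv, zero_notMem_L]
    · simp [L]
  by_cases h : (0 : Fin (m + 1)) ∈ u
  · left
    obtain ⟨s, hs⟩ := key (u.erase 0) (by simp)
    exact ⟨s, by rw [Z, ← hs, Finset.insert_erase h]⟩
  · right; exact key u h

/-- Subsets of `Fin (m+1)` either contain `0` or not. -/
noncomputable def E (m : ℕ) : Finset (Fin m) ⊕ Finset (Fin m) ≃ Finset (Fin (m + 1)) :=
  Equiv.ofBijective (Sum.elim Z L) (by
    constructor
    · rintro (s | s) (t | t) h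
      · simpa [Z_inj] using h
      · exact absurd h.symm (L_ne_Z _ _)
      · exact absurd h (L_ne_Z _ _)
      · simpa [L_inj] using h
    · intro u
      rcases exists_ZL u with ⟨s, rfl⟩ | ⟨s, rfl⟩
      · exact ⟨Sum.inl s, rfl⟩
      · exact ⟨Sum.inr s, rfl⟩)

lemma sum_ZL {m : ℕ} {M : Type*} [AddCommMonoid M] (g : Finset (Fin (m + 1)) → M) :
    ∑ u, g u = ∑ s, g (Z s) + ∑ s, g (L s) := by
  rw [← (E m).sum_comp, Fintype.sum_sum_type]
  rfl

lemma L_erase {m : ℕ} (s : Finset (Fin m)) (x : Fin m) : (L s).erase x.succ = L (s.erase x) := by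
  simp [L, Finset.map_erase]

lemma Z_erase {m : ℕ} (s : Finset (Fin m)) (x : Fin m) : (Z s).erase x.succ = Z (s.erase x) := by
  rw [Z, Finset.erase_insert_of_ne (Fin.succ_ne_zero x).symm, L_erase, Z]

lemma Z_erase_zero {m : ℕ} (s : Finset (Fin m)) : (Z s).erase 0 = L s := by
  rw [Z, Finset.erase_insert (zero_notMem_L s)]

lemma L_filter {m : ℕ} (s : Finset (Fin m)) (x : Fin m) :
    (L s).filter (· < x.succ) = L (s.filter (· < x)) := by
  ext y
  refine Fin.cases ?_ (fun z => ?_) y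
  · simp [zero_notMem_L]
  · simp [L]

lemma Z_filter {m : ℕ} (s : Finset (Fin m)) (x : Fin m) :
    (Z s).filter (· < x.succ) = Z (s.filter (· < x)) := by
  rw [Z, Finset.filter_insert, if_pos (Fin.succ_pos x), L_filter, Z]

lemma sum_L {m : ℕ} (s : Finset (Fin m)) (g : Fin (m + 1) → ℤ) :
    ∑ x ∈ L s, g x = ∑ x ∈ s, g x.succ := by
  simp [L]

lemma sum_Z {m : ℕ} (s : Finset (Fin m)) (g : Fin (m + 1) → ℤ) :
    ∑ x ∈ Z s, g x = g 0 + ∑ x ∈ s, g x.succ := by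
  rw [Z, Finset.sum_insert (zero_notMem_L s), sum_L]

lemma D_LL {m : ℕ} (s t : Finset (Fin m)) : D (m + 1) (L s) (L t) = D m s t := by
  simp only [D, sum_L, L_erase, L_inj, L_filter, card_L]

lemma D_ZL {m : ℕ} (s t : Finset (Fin m)) : D (m + 1) (Z s) (L t) = 0 := by
  simp only [D, sum_L, L_erase, (L_ne_Z _ _).symm, if_false, Finset.sum_const_zero]

lemma D_LZ {m : ℕ} (s t : Finset (Fin m)) : D (m + 1) (L s) (Z t) = if s = t then 1 else 0 := by
  simp [D, sum_Z, Z_erase, Z_erase_zero, L_ne_Z, L_inj]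

lemma D_ZZ {m : ℕ} (s t : Finset (Fin m)) : D (m + 1) (Z s) (Z t) = - D m s t := by
  simp only [D, sum_Z, Z_erase, Z_erase_zero, (L_ne_Z _ _).symm, Z_inj, Z_filter, card_Z,
    if_false, zero_add, ← Finset.sum_neg_distrib]
  refine Finset.sum_congr rfl fun x _ => ?_
  split_ifs <;> simp [pow_succ]

lemma D_card {m : ℕ} {s t : Finset (Fin m)} (h : D m s t ≠ 0) : s.card + 1 = t.card := by
  obtain ⟨x, hx, h⟩ := Finset.exists_ne_zero_of_sum_ne_zero h
  split_ifs at h with hs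
  · rw [hs, Finset.card_erase_add_one hx]
  · exact absurd rfl h

lemma D_sq (m : ℕ) (s t : Finset (Fin m)) : ∑ u, D m s u * D m u t = 0 := by
  induction m with
  | zero => simp [D, Finset.eq_empty_of_isEmpty]
  | succ m ih =>
    rw [sum_ZL]
    rcases exists_ZL s with ⟨s, rfl⟩ | ⟨s, rfl⟩ <;> rcases exists_ZL t with ⟨t, rfl⟩ | ⟨t, rfl⟩ <;>
      simp [D_LL, D_ZL, D_LZ, D_ZZ, ih]

lemma D_lap (m : ℕ) (s t : Finset (Fin m)) :
    ∑ u, D m u s * D m u t + ∑ u, D m s u * D m t u = if s = t then (m : ℤ) else 0 := by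
  induction m with
  | zero => simp [D, Finset.eq_empty_of_isEmpty]
  | succ m ih =>
    rw [sum_ZL, sum_ZL]
    rcases exists_ZL s with ⟨s, rfl⟩ | ⟨s, rfl⟩ <;> rcases exists_ZL t with ⟨t, rfl⟩ | ⟨t, rfl⟩ <;>
      have := ih s t <;>
      simp [D_LL, D_ZL, D_LZ, D_ZZ, L_inj, Z_inj, L_ne_Z, (L_ne_Z _ _).symm] <;>
      by_cases hst : s = t <;> simp [hst, eq_comm] at this ⊢ <;> linarith

/-- subsets of given size -/
abbrev S (m k : ℕ) := {σ : Finset (Fin m) // σ.card = k}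

lemma sum_S {m k : ℕ} (g : Finset (Fin m) → ℤ) (h : ∀ u, g u ≠ 0 → u.card = k) :
    ∑ u : S m k, g u.1 = ∑ u, g u := by
  rw [← Finset.sum_subtype (Finset.univ.filter (fun u : Finset (Fin m) => u.card = k)) (by simp) g,
    Finset.sum_filter_of_ne]
  intro u _ hu
  exact h u hu

lemma bdry_mul_bdry (m k : ℕ) : simplexBdry m k * simplexBdry m (k + 1) = 0 := by
  ext s t
  rw [Matrix.mul_apply]
  refine (sum_S (fun u => D m s.1 u * D m u t.1) ?_).trans (D_sq m _ _)
  intro u hu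
  have := D_card (left_ne_zero_of_mul hu)
  rw [← this, s.2]

lemma bdry_lap (m k : ℕ) :
    (simplexBdry m k)ᵀ * simplexBdry m k + simplexBdry m (k + 1) * (simplexBdry m (k + 1))ᵀ
      = (m : ℤ) • (1 : Matrix (S m (k + 1)) (S m (k + 1)) ℤ) := by
  ext s t
  rw [Matrix.add_apply, Matrix.mul_apply, Matrix.mul_apply]
  have h1 := sum_S (k := k) (fun u => D m u s.1 * D m u t.1) (by
    intro u hu
    have := D_card (left_ne_zero_of_mul hu)
    have := s.2
    omega)
  have h2 := sum_S (k := k + 1 + 1) (fun u => D m s.1 u * D m t.1 u) (by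
    intro u hu
    have := D_card (left_ne_zero_of_mul hu)
    have := s.2
    omega)
  have := D_lap m s.1 t.1
  rw [← h1, ← h2] at this
  refine Eq.trans this ?_
  simp [Matrix.one_apply, Subtype.ext_iff]

lemma bdry_lap_zero (m : ℕ) :
    simplexBdry m 0 * (simplexBdry m 0)ᵀ = (m : ℤ) • (1 : Matrix (S m 0) (S m 0) ℤ) := by
  ext s t
  rw [Matrix.mul_apply]
  have h1 : ∑ u, D m u s.1 * D m u t.1 = 0 := by
    refine Finset.sum_eq_zero fun u _ => ?_
    by_contra hu
    have := D_card (left_ne_zero_of_mul hu)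
    have := s.2
    omega
  have h2 := sum_S (k := 0 + 1) (fun u => D m s.1 u * D m t.1 u) (by
    intro u hu
    have := D_card (left_ne_zero_of_mul hu)
    have := s.2
    omega)
  have := D_lap m s.1 t.1
  rw [h1, ← h2, zero_add] at this
  refine Eq.trans this ?_
  simp [Matrix.one_apply, Subtype.ext_iff]

/-- The determinant of the reduced Laplacian. -/
noncomputable def P (m k : ℕ) : ℤ := (1 + simplexBdry m k * (simplexBdry m k)ᵀ).det

lemma P_mul (m k : ℕ) : P m k * P m (k + 1) = ((m : ℤ) + 1) ^ (Nat.choose m (k + 1)) := by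
  rw [P, P, Matrix.det_one_add_mul_comm, ← Matrix.det_mul]
  have : (1 + (simplexBdry m k)ᵀ * simplexBdry m k) *
      (1 + simplexBdry m (k + 1) * (simplexBdry m (k + 1))ᵀ) = ((m : ℤ) + 1) • 1 := by
    rw [add_mul, mul_add, mul_add, add_smul, ← bdry_lap]
    have : (simplexBdry m k)ᵀ * simplexBdry m k *
        (simplexBdry m (k + 1) * (simplexBdry m (k + 1))ᵀ) = 0 := by
      rw [Matrix.mul_assoc, ← Matrix.mul_assoc (simplexBdry m k), bdry_mul_bdry]
      simp
    rw [this]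
    simp
    abel
  rw [this, Matrix.det_smul, Matrix.det_one, mul_one, Fintype.card_finset_len, Fintype.card_fin]

lemma P_eq (m k : ℕ) : P (m + 1) k = ((m + 1 : ℕ) + 1 : ℤ) ^ (Nat.choose m k) := by
  induction k with
  | zero =>
    have : P (m + 1) 0 = ((((m + 1 : ℕ) : ℤ) + 1) • (1 : Matrix (S (m + 1) 0) (S (m + 1) 0) ℤ)).det := by
      rw [P, bdry_lap_zero, add_smul, one_smul]
      exact congrArg Matrix.det (add_comm _ _)
    rw [this, Matrix.det_smul, Fintype.card_finset_len]
    simp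
  | succ k ih =>
    have h := P_mul (m + 1) k
    rw [ih, Nat.choose_succ_succ, pow_add] at h
    exact mul_left_cancel₀ (pow_ne_zero _ (by positivity)) h

/-- The shift on subsets of size `k`. -/
def LS {m k : ℕ} (s : S m k) : S (m + 1) k := ⟨L s.1, by rw [card_L, s.2]⟩

/-- The cone on subsets of size `k`. -/
def ZS {m k : ℕ} (s : S m k) : S (m + 1) (k + 1) := ⟨Z s.1, by rw [card_Z, s.2]⟩

/-- reduced boundary matrix -/
def A (m k : ℕ) : Matrix (S m k) (S (m + 1) (k + 1)) ℤ := (simplexBdry (m + 1) k).submatrix LS id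

lemma A_mul (m k : ℕ) : (A m k * (A m k)ᵀ).det = P m k := by
  rw [P]
  congr 1
  ext s t
  rw [Matrix.mul_apply, Matrix.add_apply, Matrix.mul_apply]
  have h1 := sum_S (k := k + 1) (fun u => D (m + 1) (L s.1) u * D (m + 1) (L t.1) u) (by
    intro u hu
    rw [← D_card (left_ne_zero_of_mul hu), card_L, s.2])
  have h2 := sum_S (k := k + 1) (fun u => D m s.1 u * D m t.1 u) (by
    intro u hu
    rw [← D_card (left_ne_zero_of_mul hu), s.2])
  refine h1.trans ?_
  refine Eq.trans ?_ (congrArg ((1 : Matrix (S m k) (S m k) ℤ) s t + ·) h2.symm)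
  rw [sum_ZL]
  simp [D_LZ, D_LL, Matrix.one_apply, Subtype.ext_iff, eq_comm]

end Kalai

namespace Kalai

lemma det_mul_sum {r c : Type*} [Fintype r] [DecidableEq r] [Fintype c] [DecidableEq c]
    (A : Matrix r c ℤ) (B : Matrix c r ℤ) :
    (A * B).det = ∑ f : r → c, (∏ i, A i (f i)) * (B.submatrix f id).det := by
  have h : (A * B).det = Matrix.detRowAlternating.toMultilinearMap
      (fun i => ∑ j, A i j • (B j)) := by
    show Matrix.det _ = Matrix.det _
    congr 1
    ext i k
    simp [Matrix.mul_apply]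
  rw [h, MultilinearMap.map_sum]
  refine Finset.sum_congr rfl fun f _ => ?_
  rw [MultilinearMap.map_smul_univ, smul_eq_mul]
  rfl

lemma cauchyBinet {r c : Type*} [Fintype r] [DecidableEq r] [Fintype c] [DecidableEq c]
    (A : Matrix r c ℤ) (B : Matrix c r ℤ) (e : Finset c → r → c)
    (he : ∀ T : Finset c, T.card = Fintype.card r →
      Function.Injective (e T) ∧ Finset.univ.image (e T) = T) :
    (A * B).det = ∑ T ∈ Finset.univ.filter (fun T : Finset c => T.card = Fintype.card r),
      (A.submatrix id (e T)).det * (B.submatrix (e T) id).det := by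
  rw [det_mul_sum, ← Finset.sum_fiberwise (s := Finset.univ) (g := fun f : r → c => Finset.univ.image f),
    Finset.sum_filter]
  refine Finset.sum_congr rfl fun T _ => ?_
  split_ifs with hT
  · obtain ⟨hinj, him⟩ := he T hT
    rw [Matrix.det_apply', Finset.sum_mul]
    symm
    refine Finset.sum_bij' (i := fun (σ : Equiv.Perm r) _ => fun i => e T (σ⁻¹ i))
      (j := fun f hf => (Equiv.ofBijective (fun i => (Equiv.ofInjective (e T) hinj).symm ⟨f i, by
        rw [Finset.mem_filter] at hf
        have : f i ∈ Finset.univ.image (e T) := by rw [him, ← hf.2]; simp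
        simpa using this⟩) (by
          rw [Finset.mem_filter] at hf
          refine Finite.injective_iff_bijective.1 ?_
          intro i j hij
          have hij := (Equiv.ofInjective (e T) hinj).symm.injective hij
          have hfi : Function.Injective f := by
            have : (Finset.univ.image f).card = (Finset.univ : Finset r).card := by
              rw [hf.2, hT, Finset.card_univ]
            simpa using Finset.card_image_iff.1 this
          exact hfi (by simpa using hij)))⁻¹) ?_ ?_ ?_ ?_ ?_
    · intro σ _
      simp only [Finset.mem_filter, Finset.mem_univ, true_and]
      conv_rhs => rw [← him]
      ext x
      simp only [Finset.mem_image, Finset.mem_univ, true_and]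
      exact ((σ⁻¹).surjective.exists (p := fun y => e T y = x)).symm
    · intro f _; simp
    · intro σ _
      rw [inv_eq_iff_eq_inv]
      ext i
      simp
    · intro f hf
      funext i
      simp only [inv_inv, Equiv.ofBijective_apply]
      exact congrArg Subtype.val ((Equiv.ofInjective (e T) hinj).apply_symm_apply _)
    · intro σ _
      have h1 : (B.submatrix (fun i => e T (σ⁻¹ i)) id).det =
          (Equiv.Perm.sign σ : ℤ) * (B.submatrix (e T) id).det := by
        have := Matrix.det_permute σ⁻¹ (B.submatrix (e T) id)
        rw [Equiv.Perm.sign_inv] at this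
        exact_mod_cast this
      rw [h1]
      have h2 : ∏ i, A i (e T (σ⁻¹ i)) = ∏ i, (A.submatrix id (e T)) (σ i) i := by
        rw [← Equiv.prod_comp σ]
        simp
      rw [h2]
      simp only [Int.cast_id]
      ring
  · refine Finset.sum_eq_zero fun f hf => ?_
    rw [Finset.mem_filter] at hf
    have : ¬ Function.Injective f := fun hfi => hT (by
      rw [← hf.2, Finset.card_image_of_injective _ hfi, Finset.card_univ])
    rw [Function.not_injective_iff] at this
    obtain ⟨i, j, hij, hne⟩ := this
    rw [Matrix.det_zero_of_row_eq hne (by ext; simp [hij]), mul_zero]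

end Kalai

namespace Kalai

/-- integral cycles -/
abbrev K (m e : ℕ) := LinearMap.ker (simplexBdry (m + 1) e).mulVecLin

/-- restriction of cycles to faces avoiding `0` -/
def resL (m e : ℕ) : K m e →ₗ[ℤ] (S m (e + 1) → ℤ) :=
  (LinearMap.funLeft ℤ ℤ LS).comp (K m e).subtype

/-- columns as cycles -/
def colK (m e : ℕ) (τ : S (m + 1) (e + 1 + 1)) : K m e :=
  ⟨(simplexBdry (m + 1) (e + 1))ᵀ τ, by
    rw [LinearMap.mem_ker, Matrix.mulVecLin_apply]
    ext s
    exact congrFun (congrFun (bdry_mul_bdry (m + 1) e) s) τ⟩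

lemma resL_colK (m e : ℕ) (τ) : resL m e (colK m e τ) = (A m (e + 1))ᵀ τ := rfl

lemma exists_ZLS {m k : ℕ} (u : S (m + 1) (k + 1)) : (∃ s, u = ZS s) ∨ (∃ s, u = LS s) := by
  obtain ⟨u, hu⟩ := u
  rcases exists_ZL u with ⟨s, rfl⟩ | ⟨s, rfl⟩
  · left; exact ⟨⟨s, by rw [card_Z] at hu; omega⟩, rfl⟩
  · right; exact ⟨⟨s, by rw [card_L] at hu; omega⟩, rfl⟩

lemma resL_injective (m e : ℕ) : Function.Injective (resL m e) := by
  rw [injective_iff_map_eq_zero]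
  rintro ⟨z, hz⟩ h
  have hL : ∀ s : S m (e + 1), z (LS s) = 0 := fun s => congrFun h s
  ext u
  show z u = 0
  rcases exists_ZLS u with ⟨s, rfl⟩ | ⟨s, rfl⟩
  · rw [LinearMap.mem_ker, Matrix.mulVecLin_apply] at hz
    have h1 := congrFun hz (LS s)
    simp only [Matrix.mulVec, dotProduct] at h1
    rw [Finset.sum_eq_single (ZS s)] at h1
    · have h2 : simplexBdry (m + 1) e (LS s) (ZS s) = 1 := by
        have := D_LZ s.1 s.1
        rw [if_pos rfl] at this
        exact this
      simpa [h2] using h1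
    · intro t _ ht
      rcases exists_ZLS t with ⟨t, rfl⟩ | ⟨t, rfl⟩
      · have h2 : simplexBdry (m + 1) e (LS s) (ZS t) = 0 := by
          have := D_LZ s.1 t.1
          rw [if_neg (fun h => ht (by rw [Subtype.ext h]))] at this
          exact this
        rw [h2, zero_mul]
      · rw [hL, mul_zero]
    · simp
  · exact hL s

lemma resL_surjective (m e : ℕ) : Function.Surjective (resL m e) := by
  intro w
  refine ⟨∑ s, w s • colK m e (ZS s), ?_⟩
  rw [map_sum]
  ext t
  rw [Finset.sum_apply, Finset.sum_eq_single t]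
  · rw [map_smul, resL_colK]
    have := D_LZ t.1 t.1
    rw [if_pos rfl] at this
    show w t * D (m + 1) (L t.1) (Z t.1) = w t
    rw [this, mul_one]
  · intro s _ hs
    rw [map_smul, resL_colK]
    have := D_LZ t.1 s.1
    rw [if_neg (fun h => hs (Subtype.ext h.symm))] at this
    show w s * D (m + 1) (L t.1) (Z s.1) = 0
    rw [this, mul_zero]
  · simp

/-- restriction as an equivalence -/
noncomputable def resE (m e : ℕ) : K m e ≃ₗ[ℤ] (S m (e + 1) → ℤ) :=
  LinearEquiv.ofBijective (resL m e) ⟨resL_injective m e, resL_surjective m e⟩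

lemma card_H (m e : ℕ) (T : Finset (S (m + 1) (e + 1 + 1))) :
    Nat.card (KalaiH (m + 1) e T) =
      Nat.card ((S m (e + 1) → ℤ) ⧸ Submodule.span ℤ ((A m (e + 1))ᵀ '' (T : Set _))) := by
  refine Nat.card_congr (Submodule.Quotient.equiv _ _ (resE m e) ?_).toEquiv
  have h1 : Submodule.span ℤ ((fun τ => (simplexBdry (m + 1) (e + 1))ᵀ τ) '' (T : Set _)) =
      (Submodule.span ℤ (colK m e '' (T : Set _))).map (K m e).subtype := by
    rw [Submodule.map_span, ← Set.image_comp]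
    rfl
  have h2 : Submodule.comap (K m e).subtype
      (Submodule.span ℤ ((fun τ => (simplexBdry (m + 1) (e + 1))ᵀ τ) '' (T : Set _))) =
      Submodule.span ℤ (colK m e '' (T : Set _)) := by
    rw [h1, Submodule.comap_map_eq_of_injective (K m e).injective_subtype]
  refine (congrArg (Submodule.map _) h2).trans ?_
  rw [Submodule.map_span, ← Set.image_comp]
  rfl

lemma card_quot {r : Type*} [Fintype r] [DecidableEq r] (M : Matrix r r ℤ)
    (h : LinearIndependent ℤ M) :
    Nat.card ((r → ℤ) ⧸ Submodule.span ℤ (Set.range M)) = M.det.natAbs := by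
  rw [← Submodule.natAbs_det_basis_change (Pi.basisFun ℤ r) _ (Module.Basis.span h)]
  congr 1
  rw [Pi.basisFun_det]
  show Matrix.det _ = _
  congr 1
  ext i j
  exact congrFun (congrArg Subtype.val (Module.Basis.span_apply h i)) j

lemma li_iff {r : Type*} [Fintype r] [DecidableEq r] (M : Matrix r r ℤ) :
    LinearIndependent ℤ M ↔ M.det ≠ 0 := by
  constructor
  · intro h h0
    obtain ⟨v, hv, hv0⟩ := Matrix.exists_vecMul_eq_zero_iff.2 h0
    refine hv (funext (Fintype.linearIndependent_iff.1 h v ?_))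
    rw [← hv0]
    ext j
    simp [Matrix.vecMul, dotProduct]
  · intro h
    exact Matrix.linearIndependent_rows_of_det_ne_zero h

lemma li_sst (m e : ℕ) {ι : Type*} (f : ι → S (m + 1) (e + 1 + 1)) :
    LinearIndependent ℚ (fun i => fun σ => ((simplexBdry (m + 1) (e + 1) σ (f i) : ℤ) : ℚ)) ↔
    LinearIndependent ℤ (fun i => (A m (e + 1))ᵀ (f i)) := by
  rw [← LinearIndependent.iff_fractionRing ℤ ℚ]
  let c : (S (m + 1) (e + 1) → ℤ) →ₗ[ℤ] (S (m + 1) (e + 1) → ℚ) :=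
    (Algebra.linearMap ℤ ℚ).compLeft _
  have hc : LinearMap.ker c = ⊥ := by
    rw [LinearMap.ker_eq_bot]
    intro x y h
    ext s
    have := congrFun h s
    exact Int.cast_injective (α := ℚ) this
  have h1 := LinearMap.linearIndependent_iff (v := fun i => colK m e (f i))
    (c.comp (K m e).subtype) (by
      rw [LinearMap.ker_comp, hc, Submodule.comap_bot, Submodule.ker_subtype])
  have h2 := LinearMap.linearIndependent_iff (v := fun i => colK m e (f i))
    (resL m e) (LinearMap.ker_eq_bot.2 (resL_injective m e))
  exact h1.trans h2.symm

lemma exists_equiv (m k : ℕ) (T : Finset (S (m + 1) (k + 1)))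
    (h : T.card = Fintype.card (S m k)) : ∃ _ : S m k ≃ T, True :=
  ⟨Fintype.equivOfCardEq (by simp [h]), trivial⟩

lemma sst_det (m e : ℕ) (T : Finset (S (m + 1) (e + 1 + 1))) (f : S m (e + 1) ≃ T) :
    (IsSST (m + 1) e T ↔ ((A m (e + 1)).submatrix id (fun i => (f i).1)).det ≠ 0) ∧
    (IsSST (m + 1) e T → Nat.card (KalaiH (m + 1) e T) =
      ((A m (e + 1)).submatrix id (fun i => (f i).1)).det.natAbs) := by
  have hcard : T.card = Nat.choose (m + 1 - 1) (e + 1) := by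
    have := Fintype.card_congr f
    rw [Fintype.card_finset_len] at this
    simpa using this.symm
  have key : IsSST (m + 1) e T ↔
      LinearIndependent ℤ ((A m (e + 1)).submatrix id (fun i => (f i).1))ᵀ := by
    rw [IsSST, and_iff_right hcard]
    exact (li_sst m e (fun τ : T => τ.1)).trans (linearIndependent_equiv f).symm
  refine ⟨key.trans (by rw [li_iff, Matrix.det_transpose]), fun h => ?_⟩
  rw [card_H, ← Matrix.det_transpose, ← card_quot _ (key.1 h)]
  have : (A m (e + 1))ᵀ '' (T : Set _) =
      Set.range ((A m (e + 1)).submatrix id (fun i => (f i).1))ᵀ := by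
    ext v
    constructor
    · rintro ⟨τ, hτ, rfl⟩
      refine ⟨f.symm ⟨τ, hτ⟩, ?_⟩
      ext j
      simp
    · rintro ⟨i, rfl⟩
      exact ⟨(f i).1, (f i).2, rfl⟩
  rw [this]

end Kalai

/-- **Kalai's formula.**  For `2 ≤ n` and `1 ≤ d ≤ n - 1` (here `d = e + 1`): every
simplicial spanning tree `T` of `Δ_{n,d}` has finite `H(T) = ker_ℤ ∂_{d-1} / im_ℤ(∂_d|_T)`,
and `∑_T |H(T)|² = n^C(n-2,d)`. -/
theorem kalai_formula (n e : ℕ) (hn : 2 ≤ n) (hd : e + 1 ≤ n - 1) :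
    (∀ T, IsSST n e T → Finite (KalaiH n e T)) ∧
    (∑ᶠ T ∈ {T | IsSST n e T}, (Nat.card (KalaiH n e T)) ^ 2) =
      n ^ Nat.choose (n - 2) (e + 1) := by
  classical
  obtain ⟨m, rfl⟩ : ∃ m, n = m + 1 + 1 := ⟨n - 2, by omega⟩
  have hsst : ∀ T, IsSST (m + 1 + 1) e T → T.card = Fintype.card (Kalai.S (m + 1) (e + 1)) := by
    intro T hT
    rw [hT.1, Fintype.card_finset_len]
    simp
  constructor
  · intro T hT
    obtain ⟨f, -⟩ := Kalai.exists_equiv _ _ T (hsst T hT)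
    obtain ⟨h1, h2⟩ := Kalai.sst_det _ _ T f
    refine Nat.finite_of_card_ne_zero ?_
    rw [h2 hT]
    exact Int.natAbs_ne_zero.2 (h1.1 hT)
  · choose f _ using Kalai.exists_equiv (m + 1) (e + 1)
    let ee : Finset (Kalai.S (m + 1 + 1) (e + 1 + 1)) → Kalai.S (m + 1) (e + 1) →
        Kalai.S (m + 1 + 1) (e + 1 + 1) := fun T =>
      if h : T.card = Fintype.card (Kalai.S (m + 1) (e + 1)) then fun i => (f T h i).1
      else fun i => Kalai.ZS i
    have hee : ∀ T (h : T.card = Fintype.card (Kalai.S (m + 1) (e + 1))),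
        ee T = fun i => (f T h i).1 := fun T h => dif_pos h
    have cb := Kalai.cauchyBinet (Kalai.A (m + 1) (e + 1)) (Kalai.A (m + 1) (e + 1))ᵀ ee (by
      intro T h
      rw [hee T h]
      refine ⟨Subtype.val_injective.comp (f T h).injective, ?_⟩
      ext x
      simp only [Finset.mem_image, Finset.mem_univ, true_and]
      constructor
      · rintro ⟨i, rfl⟩; exact (f T h i).2
      · intro hx; exact ⟨(f T h).symm ⟨x, hx⟩, by simp⟩)
    rw [Kalai.A_mul, Kalai.P_eq] at cb
    have hfin : (∑ᶠ T ∈ {T | IsSST (m + 1 + 1) e T}, (Nat.card (KalaiH (m + 1 + 1) e T)) ^ 2) =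
        ∑ T ∈ Finset.univ.filter (fun T => IsSST (m + 1 + 1) e T),
          (Nat.card (KalaiH (m + 1 + 1) e T)) ^ 2 := by
      rw [← finsum_mem_coe_finset]
      simp
    rw [hfin]
    have : ((∑ T ∈ Finset.univ.filter (fun T => IsSST (m + 1 + 1) e T),
        (Nat.card (KalaiH (m + 1 + 1) e T)) ^ 2 : ℕ) : ℤ) =
        ((m + 1 : ℕ) + 1 : ℤ) ^ (Nat.choose m (e + 1)) := by
      rw [cb, Nat.cast_sum]
      have hsub : Finset.univ.filter (fun T => IsSST (m + 1 + 1) e T) ⊆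
          Finset.univ.filter (fun T : Finset (Kalai.S (m + 1 + 1) (e + 1 + 1)) =>
            T.card = Fintype.card (Kalai.S (m + 1) (e + 1))) := by
        intro T hT
        rw [Finset.mem_filter] at hT ⊢
        exact ⟨hT.1, hsst T hT.2⟩
      refine (Finset.sum_congr rfl ?_).trans (Finset.sum_subset hsub ?_)
      · intro T hT
        rw [Finset.mem_filter] at hT
        have hc := hsst T hT.2
        rw [(Kalai.sst_det _ _ T (f T hc)).2 hT.2, hee T hc, ← Matrix.transpose_submatrix,
          Matrix.det_transpose]
        push_cast
        rw [sq_abs, sq]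
      · intro T hT hT'
        rw [Finset.mem_filter] at hT hT'
        have hc := hT.2
        have hn : ¬ IsSST (m + 1 + 1) e T := fun h => hT' ⟨Finset.mem_univ _, h⟩
        have h0 := not_not.1 (fun h => hn ((Kalai.sst_det _ _ T (f T hc)).1.2 h))
        rw [hee T hc, h0, zero_mul]
    have h2 : m + 1 + 1 - 2 = m := by omega
    rw [h2]
    exact_mod_cast this
end

section
/- Fix integers n ≥ 2 and 1 ≤ d ≤ n−1, and let x_1,…,x_n be indeterminates. Call a set T ⊆ F_d a simplicial spanning tree of the d-skeleton Δ_{n,d} if |T| = C(n−1,d) and the columns of ∂_d indexed by T are linearly independent over ℚ, and let H(T) := ker_ℤ(∂_{d−1}) / (the subgroup generated by the columns of ∂_d indexed by T), a finite group. Then, in ℤ[x_1,…,x_n], the sum over all simplicial spanning trees T of |H(T)|² · ∏_{τ∈T} ∏_{i∈τ} x_i equals (x_1·x_2⋯x_n)^{C(n−2,d−1)} · (x_1+x_2+⋯+x_n)^{C(n−2,d)} (Kalai's weighted formula). -/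
open Matrix MvPolynomial

theorem cb_aux {m ι R : Type*} [Fintype m] [DecidableEq m] [Fintype ι] [DecidableEq ι]
    [CommRing R] (A : Matrix m ι R) (B : Matrix ι m R) :
    (A * B).det = ∑ p : m → ι, (A.submatrix id p).det * ∏ i, B (p i) i := by
  simp only [Matrix.det_apply', Matrix.mul_apply, Finset.prod_univ_sum, Finset.mul_sum,
    Fintype.piFinset_univ, Finset.sum_mul]
  rw [Finset.sum_comm]
  refine Finset.sum_congr rfl fun p _ => Finset.sum_congr rfl fun σ _ => ?_
  simp [Finset.prod_mul_distrib, mul_assoc]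

theorem cauchy_binet {m ι R : Type*} [Fintype m] [DecidableEq m] [Fintype ι] [DecidableEq ι]
    [CommRing R] (A : Matrix m ι R) (B : Matrix ι m R) (c : Finset ι → R)
    (hc : ∀ (T : Finset ι) (e : m ≃ T), c T =
      (A.submatrix id (fun i => (e i : ι))).det * (B.submatrix (fun i => (e i : ι)) id).det) :
    (A * B).det = ∑ T ∈ Finset.powersetCard (Fintype.card m) Finset.univ, c T := by
  classical
  rw [cb_aux]
  have h1 : ∑ p : m → ι, (A.submatrix id p).det * ∏ i, B (p i) i =
      ∑ p ∈ Finset.univ.filter (fun p : m → ι => Function.Injective p),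
        (A.submatrix id p).det * ∏ i, B (p i) i := by
    symm
    apply Finset.sum_subset (Finset.subset_univ _)
    intro p _ hp
    simp only [Finset.mem_filter, Finset.mem_univ, true_and] at hp
    rw [Function.Injective] at hp
    push Not at hp
    obtain ⟨i, j, hij, hne⟩ := hp
    rw [Matrix.det_zero_of_column_eq hne, zero_mul]
    intro k
    simp [hij]
  rw [h1]
  rw [← Finset.sum_fiberwise_of_maps_to (t := Finset.powersetCard (Fintype.card m) Finset.univ)
    (g := fun p : m → ι => Finset.univ.image p)]
  · refine Finset.sum_congr rfl fun T hT => ?_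
    have hT' : T.card = Fintype.card m := (Finset.mem_powersetCard.1 hT).2
    let e : m ≃ T := Fintype.equivOfCardEq (by simp [hT'])
    rw [hc T e]
    symm
    rw [Matrix.det_apply' (B.submatrix _ _), Finset.mul_sum]
    refine Finset.sum_bij (fun (π : Equiv.Perm m) _ => fun i => (e (π i) : ι)) ?_ ?_ ?_ ?_
    · intro π _
      simp only [Finset.mem_filter, Finset.mem_univ, true_and]
      refine ⟨fun a b hab => π.injective (e.injective (Subtype.ext hab)), ?_⟩
      ext x
      simp only [Finset.mem_image, Finset.mem_univ, true_and]
      constructor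
      · rintro ⟨a, rfl⟩
        exact (e (π a)).2
      · intro hx
        exact ⟨π.symm (e.symm ⟨x, hx⟩), by simp⟩
    · intro π _ π' _ h
      ext i
      exact e.injective (Subtype.ext (congrFun h i))
    · intro p hp
      simp only [Finset.mem_filter, Finset.mem_univ, true_and] at hp
      obtain ⟨hinj, him⟩ := hp
      have hm : ∀ i, p i ∈ T := fun i => him ▸ Finset.mem_image_of_mem p (Finset.mem_univ i)
      have hb : Function.Bijective (fun i => e.symm ⟨p i, hm i⟩) := by
        rw [← Finite.injective_iff_bijective]
        intro a b hab
        have := e.symm.injective hab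
        exact hinj (congrArg Subtype.val this)
      exact ⟨Equiv.ofBijective _ hb, Finset.mem_univ _, by ext i; simp⟩
    · intro π _
      have : (A.submatrix id (fun i => (e (π i) : ι))) =
          (A.submatrix id (fun i => (e i : ι))).submatrix id π := by
        ext; simp
      rw [this, Matrix.det_permute']
      simp only [Matrix.submatrix_apply, id]
      ring
  · intro p hp
    simp only [Finset.mem_filter, Finset.mem_univ, true_and] at hp
    simp [Finset.mem_powersetCard, Finset.card_image_of_injective _ hp]

/-- index of the column lattice of a nonsingular integer matrix -/
theorem card_quot_range {m : Type*} [Fintype m] [DecidableEq m] (A : Matrix m m ℤ)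
    (hA : A.det ≠ 0) :
    Nat.card ((m → ℤ) ⧸ LinearMap.range A.mulVecLin) = A.det.natAbs := by
  have hinj : Function.Injective A.mulVecLin := by
    intro x y hxy
    have h0 : A *ᵥ (x - y) = 0 := by
      rw [Matrix.mulVec_sub, sub_eq_zero]
      exact hxy
    exact sub_eq_zero.1 (Matrix.eq_zero_of_mulVec_eq_zero hA h0)
  let e := LinearEquiv.ofInjective A.mulVecLin hinj
  rw [← Submodule.natAbs_det_equiv (LinearMap.range A.mulVecLin) e]
  congr 1
  have : ((LinearMap.range A.mulVecLin).subtype ∘ₗ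
      (AddMonoidHom.toIntLinearMap (e : (m → ℤ) →+ LinearMap.range A.mulVecLin))) = Matrix.toLin' A := by
    ext; rfl
  rw [this, LinearMap.det_toLin']

theorem det_sylv {m ι R : Type*} [Fintype m] [DecidableEq m] [Fintype ι] [DecidableEq ι]
    [CommRing R] (A : Matrix m ι R) (B : Matrix ι m R) (y : R) :
    y ^ Fintype.card ι * (y • (1 : Matrix m m R) + A * B).det =
      y ^ Fintype.card m * (y • (1 : Matrix ι ι R) + B * A).det := by
  have h := congrArg (Polynomial.eval y) (Matrix.charpoly_mul_comm' (-A) B)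
  simpa [Matrix.eval_charpoly, sub_neg_eq_add, Matrix.smul_one_eq_diagonal] using h

section raw
variable {R : Type*} [CommRing R] {n : ℕ}

def ksg (R : Type*) [CommRing R] {n : ℕ} (x : Fin n) (τ : Finset (Fin n)) : R :=
  (-1) ^ ((τ.filter (· < x)).card)

def KK (a : Fin n → R) (σ τ : Finset (Fin n)) : R :=
  ∑ x ∈ τ, if σ = τ.erase x then a x * ksg R x τ else 0

theorem ksg_sq (x : Fin n) (τ : Finset (Fin n)) : ksg R x τ * ksg R x τ = 1 := by
  rw [ksg, ← pow_add, ← two_mul, pow_mul]; simp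

theorem ksg_insert_self (x : Fin n) (τ : Finset (Fin n)) : ksg R x (insert x τ) = ksg R x τ := by
  simp [ksg, Finset.filter_insert]

theorem ksg_insert {x z : Fin n} {σ : Finset (Fin n)} (hx : x ∉ σ) :
    ksg R z (insert x σ) = (if x < z then -1 else 1) * ksg R z σ := by
  unfold ksg
  rw [Finset.filter_insert]
  split_ifs with h
  · rw [Finset.card_insert_of_notMem (by simp [hx]), pow_succ]; ring
  · simp

theorem ksg_swap {x z : Fin n} {σ : Finset (Fin n)} (hx : x ∉ σ) (hz : z ∈ σ) :
    ksg R x σ * ksg R z (insert x σ) = -(ksg R z σ * ksg R x (σ.erase z)) := by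
  have hne : x ≠ z := fun h => hx (h ▸ hz)
  rw [ksg_insert hx]
  conv_lhs => rw [← Finset.insert_erase hz, ksg_insert (z := x) (Finset.notMem_erase z σ),
    Finset.insert_erase hz]
  rcases lt_or_gt_of_ne hne with h | h
  · simp [h, not_lt_of_gt h]; ring
  · simp [h, not_lt_of_gt h]; ring

theorem ksg_anti {x z : Fin n} {σ : Finset (Fin n)} (hx : x ∉ σ) (hz : z ∉ σ) (hne : x ≠ z) :
    ksg R x σ * ksg R z (insert x σ) = -(ksg R z σ * ksg R x (insert z σ)) := by
  rw [ksg_insert hx, ksg_insert hz]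
  rcases lt_or_gt_of_ne hne with h | h
  · simp [h, not_lt_of_gt h]; ring
  · simp [h, not_lt_of_gt h]; ring

theorem KK_eq {a : Fin n → R} {σ τ S : Finset (Fin n)} (hτ : τ ⊆ S) :
    KK a σ τ = ∑ x ∈ S \ σ, if τ = insert x σ then a x * ksg R x σ else 0 := by
  unfold KK
  rw [← Finset.sum_filter, ← Finset.sum_filter]
  have : τ.filter (fun x => σ = τ.erase x) = (S \ σ).filter (fun x => τ = insert x σ) := by
    ext x
    simp only [Finset.mem_filter, Finset.mem_sdiff]
    constructor
    · rintro ⟨h1, rfl⟩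
      exact ⟨⟨hτ h1, by simp⟩, by simp [h1]⟩
    · rintro ⟨⟨h1, h2⟩, rfl⟩
      exact ⟨by simp, by simp [h2]⟩
  rw [this]
  refine Finset.sum_congr rfl fun x hx => ?_
  rw [(Finset.mem_filter.1 hx).2, ksg_insert_self]

theorem sumK {a : Fin n → R} {σ S : Finset (Fin n)} {k : ℕ} (hσ : σ ⊆ S) (hk : σ.card = k)
    (g : Finset (Fin n) → R) :
    ∑ τ ∈ S.powersetCard (k + 1), KK a σ τ * g τ =
      ∑ x ∈ S \ σ, a x * ksg R x σ * g (insert x σ) := by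
  have h1 : ∀ τ ∈ S.powersetCard (k + 1), KK a σ τ * g τ =
      ∑ x ∈ S \ σ, if τ = insert x σ then a x * ksg R x σ * g τ else 0 := by
    intro τ hτ
    rw [KK_eq (Finset.mem_powersetCard.1 hτ).1, Finset.sum_mul]
    simp [ite_mul]
  rw [Finset.sum_congr rfl h1, Finset.sum_comm]
  refine Finset.sum_congr rfl fun x hx => ?_
  rw [Finset.mem_sdiff] at hx
  rw [Finset.sum_ite_eq', if_pos]
  rw [Finset.mem_powersetCard]
  exact ⟨Finset.insert_subset hx.1 hσ, by rw [Finset.card_insert_of_notMem hx.2, hk]⟩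

theorem sumKT {a : Fin n → R} {τ S : Finset (Fin n)} {k : ℕ} (hτ : τ ⊆ S) (hk : τ.card = k + 1)
    (g : Finset (Fin n) → R) :
    ∑ σ ∈ S.powersetCard k, KK a σ τ * g σ =
      ∑ x ∈ τ, a x * ksg R x τ * g (τ.erase x) := by
  simp only [KK, Finset.sum_mul, ite_mul, zero_mul]
  rw [Finset.sum_comm]
  refine Finset.sum_congr rfl fun x hx => ?_
  rw [Finset.sum_ite_eq', if_pos]
  rw [Finset.mem_powersetCard]
  exact ⟨(Finset.erase_subset _ _).trans hτ, by rw [Finset.card_erase_of_mem hx, hk]; rfl⟩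

theorem sum_antisymm {ι : Type*} [DecidableEq ι] (A : Finset ι) (G : ι → ι → R)
    (h : ∀ x ∈ A, ∀ z ∈ A, x ≠ z → G x z = - G z x) :
    ∑ x ∈ A, ∑ z ∈ A.erase x, G x z = 0 := by
  rw [Finset.sum_sigma']
  refine Finset.sum_involution (fun p _ => ⟨p.2, p.1⟩) ?_ ?_ ?_ ?_
  · rintro ⟨x, z⟩ hp
    simp only [Finset.mem_sigma, Finset.mem_erase] at hp
    rw [h x hp.1 z hp.2.2 (Ne.symm hp.2.1)]; simp
  · rintro ⟨x, z⟩ hp _ heq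
    simp only [Finset.mem_sigma, Finset.mem_erase] at hp
    simp only [Sigma.mk.injEq] at heq
    exact hp.2.1 heq.1
  · rintro ⟨x, z⟩ hp
    simp only [Finset.mem_sigma, Finset.mem_erase] at hp ⊢
    exact ⟨hp.2.2, Ne.symm hp.2.1, hp.1⟩
  · rintro ⟨x, z⟩ hp
    rfl

theorem KK_sq {a : Fin n → R} {σ ρ S : Finset (Fin n)} {k : ℕ} (hσ : σ ⊆ S) (hk : σ.card = k)
    (hρ : ρ ⊆ S) : ∑ τ ∈ S.powersetCard (k + 1), KK a σ τ * KK a τ ρ = 0 := by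
  rw [sumK hσ hk (fun τ => KK a τ ρ)]
  have h1 : ∀ x ∈ S \ σ, a x * ksg R x σ * KK a (insert x σ) ρ =
      ∑ z ∈ (S \ σ).erase x, a x * ksg R x σ *
        (if ρ = insert z (insert x σ) then a z * ksg R z (insert x σ) else 0) := by
    intro x hx
    rw [KK_eq hρ, Finset.mul_sum]
    congr 1
    ext z; simp only [Finset.mem_sdiff, Finset.mem_insert, Finset.mem_erase]; tauto
  rw [Finset.sum_congr rfl h1]
  apply sum_antisymm
  intro x hx z hz hne
  rw [Finset.mem_sdiff] at hx hz
  rw [Finset.insert_comm x z σ]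
  split_ifs with h
  · have := ksg_anti (R := R) hx.2 hz.2 hne
    linear_combination a x * a z * this
  · simp

theorem KK_anticomm {a : Fin n → R} {σ σ' S : Finset (Fin n)} {j : ℕ} (hσ : σ ⊆ S)
    (hk : σ.card = j + 1) (hσ' : σ' ⊆ S) :
    ∑ ρ ∈ S.powersetCard j, KK 1 ρ σ * KK a ρ σ' +
      ∑ τ ∈ S.powersetCard (j + 1 + 1), KK a σ τ * KK 1 σ' τ =
      if σ = σ' then ∑ x ∈ S, a x else 0 := by
  rw [sumK hσ hk (fun τ => KK 1 σ' τ), sumKT hσ hk (fun ρ => KK a ρ σ')]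
  have h1 : ∀ x ∈ S \ σ, a x * ksg R x σ * KK 1 σ' (insert x σ) =
      (if σ = σ' then a x else 0) + ∑ z ∈ σ, a x * ksg R x σ *
        (if σ' = (insert x σ).erase z then ksg R z (insert x σ) else 0) := by
    intro x hx
    rw [Finset.mem_sdiff] at hx
    rw [KK, Finset.sum_insert hx.2, mul_add, Finset.mul_sum]
    congr 1
    · rw [Finset.erase_insert hx.2, ksg_insert_self]
      by_cases h : σ = σ'
      · subst h
        simp only [if_true, Pi.one_apply, one_mul]
        linear_combination a x * ksg_sq (R := R) x σ
      · rw [if_neg h, if_neg (Ne.symm h), mul_zero]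
    · simp
  have h2 : ∀ z ∈ σ, (1 : Fin n → R) z * ksg R z σ * KK a (σ.erase z) σ' =
      (if σ = σ' then a z else 0) + ∑ x ∈ S \ σ, ksg R z σ *
        (if σ' = insert x (σ.erase z) then a x * ksg R x (σ.erase z) else 0) := by
    intro z hz
    have hs : S \ σ.erase z = insert z (S \ σ) := by
      ext y
      simp only [Finset.mem_sdiff, Finset.mem_insert, Finset.mem_erase]
      by_cases hy : y = z
      · subst hy; simp [hσ hz]
      · simp [hy]
    rw [KK_eq hσ', hs, Finset.sum_insert (by simp [hz]), mul_add, Finset.mul_sum]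
    congr 1
    · have e1 : ksg R z (σ.erase z) = ksg R z σ := by
        rw [← ksg_insert_self z (σ.erase z), Finset.insert_erase hz]
      rw [Finset.insert_erase hz, e1]
      by_cases h : σ = σ'
      · subst h
        simp only [if_true, Pi.one_apply, one_mul]
        linear_combination a z * ksg_sq (R := R) z σ
      · rw [if_neg h, if_neg (Ne.symm h), mul_zero]
    · simp
  rw [Finset.sum_congr rfl h1, Finset.sum_congr rfl h2, Finset.sum_add_distrib,
    Finset.sum_add_distrib]
  have h3 : ∑ z ∈ σ, ∑ x ∈ S \ σ, ksg R z σ *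
        (if σ' = insert x (σ.erase z) then a x * ksg R x (σ.erase z) else 0) =
      - ∑ x ∈ S \ σ, ∑ z ∈ σ, a x * ksg R x σ *
        (if σ' = (insert x σ).erase z then ksg R z (insert x σ) else 0) := by
    rw [Finset.sum_comm, ← Finset.sum_neg_distrib]
    refine Finset.sum_congr rfl fun x hx => ?_
    rw [← Finset.sum_neg_distrib]
    refine Finset.sum_congr rfl fun z hz => ?_
    rw [Finset.mem_sdiff] at hx
    have hne : z ≠ x := fun h => hx.2 (h ▸ hz)
    rw [Finset.erase_insert_of_ne (Ne.symm hne)]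
    split_ifs with h
    · linear_combination (a x) * ksg_swap (R := R) hx.2 hz
    · simp
  rw [h3]
  have h4 : ∑ z ∈ σ, (if σ = σ' then a z else 0) + ∑ x ∈ S \ σ, (if σ = σ' then a x else 0) =
      if σ = σ' then ∑ x ∈ S, a x else 0 := by
    rw [add_comm, Finset.sum_sdiff hσ]
    split_ifs <;> simp
  linear_combination h4

def KM (S : Finset (Fin n)) (a : Fin n → R) (k : ℕ) :
    Matrix (S.powersetCard k) (S.powersetCard (k + 1)) R := fun σ τ => KK a σ τ

def DM (R : Type*) [CommRing R] (S : Finset (Fin n)) (k : ℕ) :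
    Matrix (S.powersetCard (k + 1)) (S.powersetCard k) R := fun τ σ => KK (1 : Fin n → R) σ τ

/-- weighted up-Laplacian -/
def KD (S : Finset (Fin n)) (a : Fin n → R) (k : ℕ) :
    Matrix (S.powersetCard k) (S.powersetCard k) R := KM S a k * DM R S k

theorem KD_apply (S : Finset (Fin n)) (a : Fin n → R) (k : ℕ) (σ σ' : S.powersetCard k) :
    KD S a k σ σ' = ∑ τ, KM S a k σ τ * DM R S k τ σ' := by
  rw [KD, Matrix.mul_apply]

theorem KM_det [IsDomain R] (S : Finset (Fin n)) (a : Fin n → R) (M : ℕ) (hS : S.card = M + 1)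
    (y : R) (hy : y ≠ 0) (hys : y + ∑ x ∈ S, a x ≠ 0) (k : ℕ) :
    (y • (1 : Matrix (S.powersetCard k) (S.powersetCard k) R) + KM S a k * DM R S k).det =
      y ^ ((M + 1).choose k - M.choose k) * (y + ∑ x ∈ S, a x) ^ M.choose k := by
  induction k with
  | zero =>
    have : Unique (S.powersetCard 0) :=
      ⟨⟨⟨∅, by simp⟩⟩, by rintro ⟨x, hx⟩; simpa using hx⟩
    rw [Matrix.det_unique]
    have hd : ((default : S.powersetCard 0) : Finset (Fin n)) = ∅ := by
      have := (default : S.powersetCard 0).2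
      simpa using this
    simp only [Matrix.add_apply, Matrix.mul_apply, DM, KM]
    have := Finset.sum_coe_sort (S.powersetCard (0 + 1)) (fun τ => KK a ∅ τ * KK 1 ∅ τ)
    rw [hd, this, sumK (by simp) (by simp)]
    simp [KK, ksg, Finset.erase_eq, Finset.filter_singleton]
  | succ k ih =>
    set N := M + 1 with hN
    have h1 := det_sylv (KM S a k) (DM R S k) y
    have hmul : (y • (1 : Matrix (S.powersetCard (k + 1)) (S.powersetCard (k + 1)) R) + DM R S k * KM S a k) *
        (y • (1 : Matrix (S.powersetCard (k + 1)) (S.powersetCard (k + 1)) R) + KM S a (k + 1) * DM R S (k + 1)) =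
        (y * (y + ∑ x ∈ S, a x)) • (1 : Matrix (S.powersetCard (k + 1)) (S.powersetCard (k + 1)) R) := by
      have hKK : KM S a k * KM S a (k + 1) = 0 := by
        ext σ ρ
        obtain ⟨h1, h2⟩ := Finset.mem_powersetCard.1 σ.2
        obtain ⟨h3, -⟩ := Finset.mem_powersetCard.1 ρ.2
        rw [Matrix.mul_apply]
        exact (Finset.sum_coe_sort (S.powersetCard (k + 1))
          (fun τ => KK a σ τ * KK a τ ρ)).trans (KK_sq h1 h2 h3)
      have hac : DM R S k * KM S a k + KM S a (k + 1) * DM R S (k + 1) =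
          (∑ x ∈ S, a x) • (1 : Matrix (S.powersetCard (k + 1)) (S.powersetCard (k + 1)) R) := by
        ext σ σ'
        obtain ⟨h1, h2⟩ := Finset.mem_powersetCard.1 σ.2
        obtain ⟨h3, -⟩ := Finset.mem_powersetCard.1 σ'.2
        have := KK_anticomm (a := a) h1 h2 h3
        rw [← Finset.sum_coe_sort (S.powersetCard k),
          ← Finset.sum_coe_sort (S.powersetCard (k + 1 + 1))] at this
        simp only [Matrix.add_apply, Matrix.mul_apply, DM, KM,
          Matrix.smul_apply, Matrix.one_apply, Subtype.ext_iff, smul_eq_mul, mul_ite, mul_one, mul_zero]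
        exact this
      have h0 : DM R S k * KM S a k * (KM S a (k + 1) * DM R S (k + 1)) = 0 := by
        rw [Matrix.mul_assoc, ← Matrix.mul_assoc (KM S a k), hKK]; simp
      rw [add_mul, mul_add, mul_add, h0, add_zero, smul_mul_assoc, smul_mul_assoc, one_mul, one_mul,
        mul_smul_comm, mul_one, add_assoc, ← smul_add, add_comm (KM S a (k + 1) * _), hac,
        ← smul_add, ← add_smul, smul_smul]
    have h2 := congrArg Matrix.det hmul
    rw [Matrix.det_mul] at h2
    simp only [Matrix.det_smul, Matrix.det_one, mul_one,
      Fintype.card_coe, Finset.card_powersetCard, hS] at h2 h1 ih ⊢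
    rw [ih] at h1
    set s := ∑ x ∈ S, a x
    have e0 : N.choose k - M.choose k + M.choose k = N.choose k :=
      Nat.sub_add_cancel (Nat.choose_le_choose _ (by omega))
    have e1 : N.choose (k + 1) = M.choose k + M.choose (k + 1) := Nat.choose_succ_succ _ _
    set b := N.choose k - M.choose k
    rw [show N.choose (k + 1) - M.choose (k + 1) = M.choose k by omega]
    have hne : y ^ (N.choose (k+1)) * (y ^ b * (y + s) ^ M.choose k) ≠ 0 := 
      mul_ne_zero (pow_ne_zero _ hy) (mul_ne_zero (pow_ne_zero _ hy) (pow_ne_zero _ hys))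
    apply mul_left_cancel₀ hne
    calc _ = y ^ N.choose k * (y * (y + s)) ^ N.choose (k + 1) := by
          rw [h1, mul_assoc, h2]
      _ = _ := by
          rw [← e0, mul_pow, pow_add y b]
          conv_lhs => rw [e1, pow_add (y + s)]
          rw [← e1]
          ring
end raw

section homol
variable {R : Type*} [CommRing R] {n : ℕ}

theorem simplexBdry_eq (k : ℕ) (σ : {σ : Finset (Fin n) // σ.card = k})
    (τ : {τ : Finset (Fin n) // τ.card = k + 1}) :
    ((simplexBdry n k σ τ : ℤ) : R) = KK (1 : Fin n → R) σ.1 τ.1 := by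
  simp only [simplexBdry, KK, ksg, Int.cast_sum]
  refine Finset.sum_congr rfl fun x _ => ?_
  split_ifs <;> simp

theorem sum_sub (k : ℕ) (F : Finset (Fin n) → R) :
    ∑ τ : {τ : Finset (Fin n) // τ.card = k}, F τ.1 =
      ∑ τ ∈ (Finset.univ : Finset (Fin n)).powersetCard k, F τ := by
  symm
  apply Finset.sum_subtype
  intro x; simp [Finset.mem_powersetCard]

/-- extension by zero -/
def ext0 {k : ℕ} (f : {σ : Finset (Fin n) // σ.card = k} → R) (σ : Finset (Fin n)) : R :=
  if h : σ.card = k then f ⟨σ, h⟩ else 0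

theorem ext0_apply {k : ℕ} (f : {σ : Finset (Fin n) // σ.card = k} → R)
    (σ : {σ : Finset (Fin n) // σ.card = k}) : ext0 f σ.1 = f σ := by
  simp [ext0, σ.2]

/-- the boundary matrix over `R` -/
def bdR (R : Type*) [CommRing R] (n k : ℕ) :
    Matrix {σ : Finset (Fin n) // σ.card = k} {τ : Finset (Fin n) // τ.card = k + 1} R :=
  fun σ τ => KK (1 : Fin n → R) σ.1 τ.1

theorem bdR_int (k : ℕ) : bdR ℤ n k = simplexBdry n k := by
  ext σ τ
  have := simplexBdry_eq (R := ℤ) k σ τ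
  simpa [bdR] using this.symm

theorem bdR_mulVec (k : ℕ) (g : Finset (Fin n) → R) (σ : {σ : Finset (Fin n) // σ.card = k}) :
    (bdR R n k *ᵥ fun τ => g τ.1) σ = ∑ x ∈ Finset.univ \ σ.1, ksg R x σ.1 * g (insert x σ.1) := by
  have h1 := sumK (a := (1 : Fin n → R)) (Finset.subset_univ σ.1) σ.2 g
  rw [← sum_sub] at h1
  simp only [Pi.one_apply, one_mul] at h1
  exact h1

theorem bdR_sq (k : ℕ) : bdR R n k * bdR R n (k + 1) = 0 := by
  ext σ ρ
  have h1 := KK_sq (a := (1 : Fin n → R)) (Finset.subset_univ σ.1) σ.2 (Finset.subset_univ ρ.1)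
  rw [← sum_sub (k + 1) (fun τ => KK (1 : Fin n → R) σ.1 τ * KK (1 : Fin n → R) τ ρ.1)] at h1
  exact h1

theorem ker_inj (v : Fin n) (k : ℕ) (f : {σ : Finset (Fin n) // σ.card = k + 1} → R)
    (hf : bdR R n k *ᵥ f = 0) (h0 : ∀ σ, v ∉ σ.1 → f σ = 0) : f = 0 := by
  funext σ
  by_cases hv : v ∈ σ.1
  · have hc : (σ.1.erase v).card = k := by rw [Finset.card_erase_of_mem hv, σ.2]; rfl
    have h1 := bdR_mulVec k (ext0 f) ⟨σ.1.erase v, hc⟩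
    have h2 : (fun τ : {σ : Finset (Fin n) // σ.card = k + 1} => ext0 f τ.1) = f :=
      funext fun τ => ext0_apply f τ
    rw [h2, hf] at h1
    rw [Finset.sum_eq_single v] at h1
    · simp only [Pi.zero_apply, Finset.insert_erase hv, ext0_apply] at h1
      have h3 := ksg_sq (R := R) v (σ.1.erase v)
      simp only [Pi.zero_apply]
      linear_combination (-f σ) * h3 - ksg R v (σ.1.erase v) * h1
    · intro x _ hx
      have : ext0 f (insert x (σ.1.erase v)) = 0 := by
        unfold ext0
        split_ifs with h
        · apply h0
          simp [Ne.symm hx]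
        · rfl
      rw [this, mul_zero]
    · simp
  · exact h0 σ hv

theorem ker_surj (v : Fin n) (k : ℕ) (G : Finset (Fin n) → R) :
    ∃ f : {σ : Finset (Fin n) // σ.card = k + 1} → R, bdR R n k *ᵥ f = 0 ∧
      ∀ σ, v ∉ σ.1 → f σ = G σ.1 := by
  refine ⟨bdR R n (k + 1) *ᵥ fun τ => (fun τ : Finset (Fin n) =>
    if v ∈ τ then ksg R v τ * G (τ.erase v) else 0) τ.1, ?_, ?_⟩
  · rw [Matrix.mulVec_mulVec, bdR_sq, Matrix.zero_mulVec]
  · intro σ hv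
    refine (bdR_mulVec (k + 1) (fun τ : Finset (Fin n) =>
      if v ∈ τ then ksg R v τ * G (τ.erase v) else 0) σ).trans ?_
    rw [Finset.sum_eq_single v]
    · simp only [Finset.mem_insert_self, if_true, ksg_insert_self, Finset.erase_insert hv]
      linear_combination (G σ.1) * ksg_sq (R := R) v σ.1
    · intro x _ hx
      rw [if_neg (by simp [hv, Ne.symm hx]), mul_zero]
    · simp [hv]

/-- row indices: faces avoiding `v` -/
abbrev RI (v : Fin n) (k : ℕ) : Type := ((Finset.univ.erase v).powersetCard k : Finset (Finset (Fin n)))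

def RI.inc {v : Fin n} {k : ℕ} (σ : RI v k) : {σ : Finset (Fin n) // σ.card = k} :=
  ⟨σ.1, (Finset.mem_powersetCard.1 σ.2).2⟩

theorem RI.not_mem {v : Fin n} {k : ℕ} (σ : RI v k) : v ∉ σ.1 := fun h => by
  have := (Finset.mem_powersetCard.1 σ.2).1 h
  simp at this

def RI.mk {v : Fin n} {k : ℕ} (σ : {σ : Finset (Fin n) // σ.card = k}) (h : v ∉ σ.1) : RI v k :=
  ⟨σ.1, Finset.mem_powersetCard.2 ⟨fun x hx => by
    simp only [Finset.mem_erase, Finset.mem_univ, and_true]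
    rintro rfl; exact h hx, σ.2⟩⟩

/-- restriction to faces avoiding `v` -/
def resl (R : Type*) [CommRing R] (v : Fin n) (k : ℕ) :
    ({σ : Finset (Fin n) // σ.card = k} → R) →ₗ[R] (RI v k → R) :=
  LinearMap.funLeft R R RI.inc

theorem resl_ker (v : Fin n) (k : ℕ) (f : {σ : Finset (Fin n) // σ.card = k + 1} → R)
    (hf : bdR R n k *ᵥ f = 0) (h : resl R v (k + 1) f = 0) : f = 0 :=
  ker_inj v k f hf fun σ hv => congrFun h (RI.mk σ hv)

variable (e : ℕ) (v : Fin n) (T : Finset {τ : Finset (Fin n) // τ.card = (e + 1) + 1})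
  (E : RI v (e + 1) ≃ T)

def redM (R : Type*) [CommRing R] (e : ℕ) (v : Fin n)
    (T : Finset {τ : Finset (Fin n) // τ.card = (e + 1) + 1}) (E : RI v (e + 1) ≃ T) :
    Matrix (RI v (e + 1)) (RI v (e + 1)) R :=
  fun i j => KK (1 : Fin n → R) i.1 (E j).1.1

theorem KK_cast (σ τ : Finset (Fin n)) : ((KK (1 : Fin n → ℤ) σ τ : ℤ) : R) = KK 1 σ τ := by
  simp only [KK, ksg, Int.cast_sum]
  refine Finset.sum_congr rfl fun x _ => ?_
  split_ifs <;> simp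

theorem redM_cast : (redM ℤ e v T E).map (Int.cast : ℤ → R) = redM R e v T E := by
  ext i j
  exact KK_cast _ _

theorem redM_det_cast : (((redM ℤ e v T E).det : ℤ) : R) = (redM R e v T E).det := by
  rw [Int.cast_det]
  exact congrArg Matrix.det (redM_cast e v T E)

theorem bd_col_ker (k : ℕ) (τ : {τ : Finset (Fin n) // τ.card = (k + 1) + 1}) :
    bdR R n k *ᵥ (bdR R n (k + 1))ᵀ τ = 0 := by
  have := bdR_sq (R := R) (n := n) k
  ext σ
  exact congrFun (congrFun this σ) τ

theorem linInd_iff : LinearIndependent ℚ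
    (fun τ : T => fun σ => ((simplexBdry n (e + 1) σ τ.1 : ℤ) : ℚ)) ↔
      (redM ℤ e v T E).det ≠ 0 := by
  have h1 : (fun τ : T => fun σ => ((simplexBdry n (e + 1) σ τ.1 : ℤ) : ℚ)) =
      fun τ : T => (bdR ℚ n (e + 1))ᵀ τ.1 := by
    funext τ σ
    exact simplexBdry_eq (R := ℚ) (e + 1) σ τ.1
  rw [h1, ← linearIndependent_equiv E,
    ← LinearMap.linearIndependent_iff_of_injOn (resl ℚ v (e + 1))]
  · have h2 : (⇑(resl ℚ v (e + 1)) ∘ (fun τ : T => (bdR ℚ n (e + 1))ᵀ τ.1) ∘ ⇑E) =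
        (redM ℚ e v T E).col := by
      funext j i
      rfl
    rw [h2, Matrix.linearIndependent_cols_iff_isUnit, Matrix.isUnit_iff_isUnit_det,
      isUnit_iff_ne_zero, ← redM_det_cast]
    simp
  · have hle : Submodule.span ℚ (Set.range ((fun τ : T => (bdR ℚ n (e + 1))ᵀ τ.1) ∘ ⇑E)) ≤
        LinearMap.ker (bdR ℚ n e).mulVecLin := by
      rw [Submodule.span_le]
      rintro _ ⟨j, rfl⟩
      exact bd_col_ker e _
    intro x hx y hy hxy
    have := resl_ker v e (x - y) (hle (Submodule.sub_mem _ hx hy)) (by rw [map_sub, sub_eq_zero]; exact hxy)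
    exact sub_eq_zero.1 this

theorem card_H (hdet : (redM ℤ e v T E).det ≠ 0) :
    Nat.card (KalaiH n e T) = (redM ℤ e v T E).det.natAbs := by
  rw [← card_quot_range _ hdet]
  let π : LinearMap.ker (simplexBdry n e).mulVecLin →ₗ[ℤ] (RI v (e + 1) → ℤ) :=
    (resl ℤ v (e + 1)).comp (LinearMap.ker (simplexBdry n e).mulVecLin).subtype
  have hmem : ∀ f, f ∈ LinearMap.ker (simplexBdry n e).mulVecLin ↔ bdR ℤ n e *ᵥ f = 0 := by
    intro f; rw [bdR_int]; rfl
  have hinj : Function.Injective π := by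
    rw [injective_iff_map_eq_zero]
    rintro ⟨f, hf⟩ h
    exact Subtype.ext (resl_ker v e f ((hmem f).1 hf) h)
  have hsurj : Function.Surjective π := by
    intro g
    obtain ⟨f, hf, hg⟩ := ker_surj (R := ℤ) v e
      (fun σ => if h : σ ∈ (Finset.univ.erase v).powersetCard (e + 1) then g ⟨σ, h⟩ else 0)
    refine ⟨⟨f, (hmem f).2 hf⟩, ?_⟩
    funext i
    refine (hg i.inc i.not_mem).trans ?_
    exact dif_pos i.2
  refine Nat.card_congr (Submodule.Quotient.equiv _ _ (LinearEquiv.ofBijective π ⟨hinj, hsurj⟩) ?_).toEquiv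
  change Submodule.map π _ = _
  rw [Submodule.map_comp, Submodule.map_comap_eq, Submodule.range_subtype, inf_eq_right.2,
    Submodule.map_span, Matrix.range_mulVecLin]
  · congr 1
    ext x
    constructor
    · rintro ⟨_, ⟨τ, hτ, rfl⟩, rfl⟩
      refine ⟨E.symm ⟨τ, hτ⟩, ?_⟩
      funext i
      simp only [Matrix.col, Matrix.transpose_apply, redM, Equiv.apply_symm_apply, ← bdR_int]
      rfl
    · rintro ⟨j, rfl⟩
      refine ⟨_, ⟨(E j).1, (E j).2, rfl⟩, ?_⟩
      funext i
      simp only [← bdR_int]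
      rfl
  · rw [Submodule.span_le]
    rintro _ ⟨τ, _, rfl⟩
    rw [SetLike.mem_coe, hmem]
    simp only [← bdR_int]
    exact bd_col_ker e τ

end homol

section final
variable {n : ℕ}

/-- monomial weight of a face -/
noncomputable def wt (τ : Finset (Fin n)) : MvPolynomial (Fin n) ℤ := ∏ i ∈ τ, X i

noncomputable def LA (v : Fin n) (k : ℕ) :
    Matrix (RI v k) {τ : Finset (Fin n) // τ.card = k + 1} (MvPolynomial (Fin n) ℤ) :=
  fun σ τ => KK 1 σ.1 τ.1 * wt τ.1

noncomputable def LB (v : Fin n) (k : ℕ) :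
    Matrix {τ : Finset (Fin n) // τ.card = k + 1} (RI v k) (MvPolynomial (Fin n) ℤ) :=
  fun τ σ => KK 1 σ.1 τ.1

theorem LAB_eq (v : Fin n) (k : ℕ) :
    LA v k * LB v k = Matrix.diagonal (fun σ : RI v k => wt σ.1) *
      ((X v : MvPolynomial (Fin n) ℤ) • (1 : Matrix (RI v k) (RI v k) (MvPolynomial (Fin n) ℤ)) +
        KD (Finset.univ.erase v) X k) := by
  ext1 σ σ'
  rw [Matrix.diagonal_mul, Matrix.add_apply, Matrix.smul_apply, Matrix.one_apply,
    Matrix.mul_apply, KD_apply]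
  obtain ⟨h1, h2⟩ := Finset.mem_powersetCard.1 σ.2
  have hL : ∑ τ, LA v k σ τ * LB v k τ σ' =
      ∑ x ∈ Finset.univ \ σ.1, ksg (MvPolynomial (Fin n) ℤ) x σ.1 *
        (wt (insert x σ.1) * KK 1 σ'.1 (insert x σ.1)) := by
    have := sumK (a := (1 : Fin n → MvPolynomial (Fin n) ℤ)) (Finset.subset_univ σ.1) h2
      (fun τ => wt τ * KK 1 σ'.1 τ)
    rw [← sum_sub (k + 1) (fun τ => KK 1 σ.1 τ * (wt τ * KK 1 σ'.1 τ))] at this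
    simp only [Pi.one_apply, one_mul, ← mul_assoc] at this ⊢
    exact this
  have hR : ∑ τ, KM (Finset.univ.erase v) X k σ τ * DM _ (Finset.univ.erase v) k τ σ' =
      ∑ x ∈ (Finset.univ.erase v) \ σ.1, X x * ksg (MvPolynomial (Fin n) ℤ) x σ.1 *
        KK 1 σ'.1 (insert x σ.1) := by
    have := sumK (a := (X : Fin n → MvPolynomial (Fin n) ℤ)) h1 h2 (fun τ => KK 1 σ'.1 τ)
    rw [← Finset.sum_coe_sort] at this
    exact this
  rw [hL, hR]
  have hs : Finset.univ \ σ.1 = insert v ((Finset.univ.erase v) \ σ.1) := by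
    ext x
    have := σ.not_mem
    by_cases hx : x = v
    · subst hx; simpa using this
    · simp [hx]
  rw [hs, Finset.sum_insert (by simp), mul_add, Finset.mul_sum]
  congr 1
  · have e1 : KK (1 : Fin n → MvPolynomial (Fin n) ℤ) σ'.1 (insert v σ.1) =
        if σ = σ' then ksg _ v σ.1 else 0 := by
      rw [KK, Finset.sum_eq_single v]
      · rw [Finset.erase_insert σ.not_mem, ksg_insert_self]
        by_cases h : σ = σ'
        · subst h; simp
        · rw [if_neg h, if_neg (fun h' => h (Subtype.ext h'.symm))]
      · intro x _ hx
        rw [if_neg]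
        intro h
        apply σ'.not_mem
        rw [h]; simp [Ne.symm hx]
      · simp
    rw [e1]
    split_ifs
    · rw [wt, Finset.prod_insert σ.not_mem, ← wt, smul_eq_mul]
      linear_combination (X v * wt σ.1) * ksg_sq (R := MvPolynomial (Fin n) ℤ) v σ.1
    · simp
  · refine Finset.sum_congr rfl fun x hx => ?_
    rw [Finset.mem_sdiff] at hx
    rw [wt, Finset.prod_insert hx.2, ← wt]
    ring

theorem prod_wt (S : Finset (Fin n)) (M e : ℕ) (hS : S.card = M + 1) :
    ∏ σ ∈ S.powersetCard (e + 1), wt σ =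
      (∏ i ∈ S, (X i : MvPolynomial (Fin n) ℤ)) ^ M.choose e := by
  have h1 : ∀ σ ∈ S.powersetCard (e + 1), wt σ =
      ∏ i ∈ S, if i ∈ σ then (X i : MvPolynomial (Fin n) ℤ) else 1 := by
    intro σ hσ
    rw [Finset.prod_ite_mem, Finset.inter_eq_right.2 (Finset.mem_powersetCard.1 hσ).1, wt]
  rw [Finset.prod_congr rfl h1, Finset.prod_comm, ← Finset.prod_pow]
  refine Finset.prod_congr rfl fun i hi => ?_
  rw [← Finset.prod_filter, Finset.prod_const]
  congr 1
  have := Finset.card_filter_powersetCard_subset {i} S (e + 1) (by simpa using hi) (by simp)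
  simpa [hS, hi] using this

theorem kalai_det (v : Fin n) (M e : ℕ) (hn : n = M + 2) :
    (LA v (e + 1) * LB v (e + 1)).det =
      (∏ i : Fin n, (X i : MvPolynomial (Fin n) ℤ)) ^ M.choose e *
        (∑ i : Fin n, X i) ^ M.choose (e + 1) := by
  have hS : (Finset.univ.erase v : Finset (Fin n)).card = M + 1 := by
    rw [Finset.card_erase_of_mem (Finset.mem_univ v), Finset.card_univ, Fintype.card_fin, hn]; rfl
  have hsum : (X v : MvPolynomial (Fin n) ℤ) + ∑ x ∈ Finset.univ.erase v, X x = ∑ i, X i :=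
    Finset.add_sum_erase _ _ (Finset.mem_univ v)
  have hne : (∑ i, X i : MvPolynomial (Fin n) ℤ) ≠ 0 := by
    intro h
    have := congrArg (MvPolynomial.eval (Pi.single v 1)) h
    simp at this
  have h := KM_det (Finset.univ.erase v) (X : Fin n → MvPolynomial (Fin n) ℤ) M hS (X v)
    (MvPolynomial.X_ne_zero v) (by rw [hsum]; exact hne) (e + 1)
  rw [LAB_eq, Matrix.det_mul, Matrix.det_diagonal]
  rw [Finset.prod_coe_sort ((Finset.univ.erase v).powersetCard (e + 1)) wt,
    prod_wt _ M e hS]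
  refine (congrArg _ h).trans ?_
  rw [hsum, Nat.choose_succ_succ, Nat.add_sub_cancel, ← mul_assoc, ← mul_pow, mul_comm (∏ i ∈ _, _),
    Finset.mul_prod_erase _ _ (Finset.mem_univ v)]

theorem natAbs_sq_cast {R : Type*} [CommRing R] (z : ℤ) :
    ((z.natAbs ^ 2 : ℕ) : R) = (z : R) * (z : R) := by
  have : ((z.natAbs ^ 2 : ℕ) : ℤ) = z * z := by
    push_cast
    rw [sq_abs, sq]
  rw [← Int.cast_natCast, this, Int.cast_mul]

end final

/-- **Kalai's weighted formula.**  For `2 ≤ n` and `1 ≤ d ≤ n - 1` (here `d = e + 1`),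
in `ℤ[x_1,…,x_n]`:
`∑_T |H(T)|² ∏_{τ ∈ T} ∏_{i ∈ τ} x_i = (x_1 ⋯ x_n)^C(n-2,d-1) · (x_1 + ⋯ + x_n)^C(n-2,d)`. -/
theorem kalai_weighted_formula (n e : ℕ) (hn : 2 ≤ n) (hd : e + 1 ≤ n - 1) :
    (∑ᶠ T ∈ {T | IsSST n e T},
        ((Nat.card (KalaiH n e T) ^ 2 : ℕ) : MvPolynomial (Fin n) ℤ) *
          ∏ τ ∈ T, ∏ i ∈ τ.1, X i) =
      (∏ i : Fin n, (X i : MvPolynomial (Fin n) ℤ)) ^ Nat.choose (n - 2) e *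
        (∑ i : Fin n, X i) ^ Nat.choose (n - 2) (e + 1) := by
  classical
  let v : Fin n := ⟨0, by omega⟩
  rw [← kalai_det v (n - 2) e (by omega)]
  have hcard : Fintype.card (RI v (e + 1)) = Nat.choose (n - 1) (e + 1) := by
    rw [Fintype.card_coe, Finset.card_powersetCard, Finset.card_erase_of_mem (Finset.mem_univ v),
      Finset.card_univ, Fintype.card_fin]
  rw [cauchy_binet (LA v (e + 1)) (LB v (e + 1)) (fun T => if IsSST n e T then
    ((Nat.card (KalaiH n e T) ^ 2 : ℕ) : MvPolynomial (Fin n) ℤ) *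
          ∏ τ ∈ T, ∏ i ∈ τ.1, X i else 0)]
  · rw [finsum_mem_eq_finite_toFinset_sum _ (Set.toFinite _), ← Finset.sum_filter]
    refine Finset.sum_congr ?_ fun _ _ => rfl
    ext T
    simp only [Set.Finite.mem_toFinset, Set.mem_ofPred_eq, Finset.mem_filter,
      Finset.mem_powersetCard, hcard]
    exact ⟨fun h => ⟨⟨Finset.subset_univ _, h.1⟩, h⟩, fun h => h.2⟩
  · intro T E
    have hT : T.card = Nat.choose (n - 1) (e + 1) := by
      rw [← hcard, Fintype.card_congr E, Fintype.card_coe]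
    have hiff : IsSST n e T ↔ (redM ℤ e v T E).det ≠ 0 := by
      rw [IsSST, linInd_iff e v T E]
      exact ⟨fun h => h.2, fun h => ⟨hT, h⟩⟩
    have hA : ((LA v (e + 1)).submatrix id (fun i => (E i).1)).det =
        (redM (MvPolynomial (Fin n) ℤ) e v T E).det * ∏ τ ∈ T, ∏ i ∈ τ.1, X i := by
      have : (LA v (e + 1)).submatrix id (fun i => (E i).1) =
          redM (MvPolynomial (Fin n) ℤ) e v T E * Matrix.diagonal (fun i => wt (E i).1.1) := by
        ext1 i j
        rw [Matrix.mul_diagonal]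
        rfl
      rw [this, Matrix.det_mul, Matrix.det_diagonal]
      congr 1
      rw [Equiv.prod_comp E (fun τ : T => wt τ.1.1)]
      exact Finset.prod_coe_sort T (fun τ => wt τ.1)
    have hB : ((LB v (e + 1)).submatrix (fun i => (E i).1) id).det =
        (redM (MvPolynomial (Fin n) ℤ) e v T E).det := by
      rw [← Matrix.det_transpose]
      rfl
    rw [hA, hB, ← redM_det_cast]
    split_ifs with h
    · rw [card_H e v T E (hiff.1 h)]
      rw [natAbs_sq_cast]; ring
    · have h0 : (redM ℤ e v T E).det = 0 := by
        by_contra h'; exact h (hiff.2 h')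
      rw [h0]; simp
end
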